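/- arXiv:1104.3528 — 8 statements merged into one kernel-verified Lean document; each statement's English description precedes it below -/
import Mathlib

section
/- Let S_1, S_2, S_3 be nonempty convex subsets of L(ℝ) such that for every tropicalized cluster monomial F and every i, the supremum c_{F,S_i} = sup_{x ∈ S_i} F(x) is finite and attained at some point of S_i. Then for every tropicalized cluster monomial F one has c_{F, S_1 + S_2} = c_{F,S_1} + c_{F,S_2}, and the Minkowski sum is associative: (S_1 + S_2) + S_3 = S_1 + (S_2 + S_3). (This is the paper's Proposition on Minkowski sums, in the coordinate model of the cluster A-variety of type A_n.) -/
/-!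
The heart of the matter is a subadditivity statement. Fix a triangulation `T`. The coordinates
`x_d`, `d ∈ T`, parametrize `L(ℝ)`, and in them every other coordinate `x_{ij}` is a maximum of
linear forms, hence subadditive. So, given `x₁, x₂ ∈ L(ℝ)`, the point `y` with
`y_d = x₁_d + x₂_d` for `d ∈ T` satisfies `y_{ij} ≤ x₁_{ij} + x₂_{ij}` for all `i, j`
(`TropPt.exists_add_on`). If `F` is a cluster monomial supported on `T` and `x₁, x₂` maximize `F`
on `S₁, S₂`, then `y ∈ S₁ + S₂` and `F(y) = c_{F,S₁} + c_{F,S₂}`; this is additivity of the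
suprema, and associativity follows by rewriting with it on both sides.

The point `y` is built by removing vertices one at a time (`exists_add_on_of_noncrossing`). The
polygon is cut open, so that its vertices are natural numbers in their linear order. Among the
members of `T` with a vertex strictly between their endpoints, let `(i, j)` be a shortest one, and
let `v` lie strictly between `i` and `j`. Then no element of `T` joins `v` to a vertex other than
its neighbours `a < v < b`. Remove `v`, add `(a, b)` to `T`, and let `z` be the solution on the
remaining vertices. The tropical Plücker relation for `v` forces
`y_{vk} = max (α + z_{ak}) (β + z_{bk})` with `α = y_{vb} - z_{ab}` and `β = y_{av} - z_{ab}`.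
As a tropical linear combination of the rows `a` and `b`, the row `v` inherits the remaining
Plücker relations, and the required inequality, from those two rows;
for the inequality the Plücker relations of `x₁` and `x₂` on `a, v, b, k` are used as well.
-/

open Finset

/-- Vertices `i, j` of the `(n+3)`-gon (labelled by `ZMod (n+3)`) are adjacent,
i.e. the segment `{i j}` is an edge. -/
def IsEdge (n : ℕ) (i j : ZMod (n + 3)) : Prop := i = j + 1 ∨ j = i + 1

/-- The segment `{i j}` is a diagonal of the `(n+3)`-gon. -/
def IsDiag (n : ℕ) (i j : ZMod (n + 3)) : Prop := i ≠ j ∧ ¬ IsEdge n i j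

/-- The distinct vertices `p, q, r, s` are in clockwise order. -/
def Clockwise (n : ℕ) (p q r s : ZMod (n + 3)) : Prop :=
  0 < (q - p).val ∧ (q - p).val < (r - p).val ∧ (r - p).val < (s - p).val

/-- The segments `{i j}` and `{k l}` cross: their endpoints interlace in cyclic order. -/
def Cross (n : ℕ) (i j k l : ZMod (n + 3)) : Prop :=
  Clockwise n i k j l ∨ Clockwise n i l j k

/-- `L(ℝ)`: the set of `ℝ`-tropical points of the cluster `A`-variety of type `Aₙ`
in its coordinate model: symmetric real functions on pairs of vertices, vanishing on
the diagonal and on edges, satisfying the tropical Plücker relations. -/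
structure TropPt (n : ℕ) where
  x : ZMod (n + 3) → ZMod (n + 3) → ℝ
  symm : ∀ i j, x i j = x j i
  diag_zero : ∀ i, x i i = 0
  edge_zero : ∀ i j, IsEdge n i j → x i j = 0
  pluecker : ∀ p q r s, Clockwise n p q r s →
    x p r + x q s = max (x p q + x r s) (x q r + x p s)

/-- A partial triangulation: a set of pairwise non-crossing diagonals. -/
structure PartialTri (n : ℕ) where
  diags : Finset (Sym2 (ZMod (n + 3)))
  mem_isDiag : ∀ i j, s(i, j) ∈ diags → IsDiag n i j
  noncross : ∀ i j k l, s(i, j) ∈ diags → s(k, l) ∈ diags → ¬ Cross n i j k l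

/-- The diagonal `{i j}` belongs to the supplement `S(T)`: it is not in `T` and
`T ∪ {i j}` is again a partial triangulation. -/
def InSupp (n : ℕ) (T : PartialTri n) (i j : ZMod (n + 3)) : Prop :=
  IsDiag n i j ∧ s(i, j) ∉ T.diags ∧
    ∀ k l, s(k, l) ∈ T.diags → ¬ Cross n i j k l ∧ ¬ Cross n k l i j

/-- The face `F_c^T` of a partial triangulation `T`. -/
def Face (n : ℕ) (T : PartialTri n) (c : ZMod (n + 3) → ZMod (n + 3) → ℝ) :
    Set (TropPt n) :=
  {x | (∀ i j, s(i, j) ∈ T.diags → x.x i j = c i j) ∧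
       (∀ i j, InSupp n T i j → x.x i j ≤ c i j)}

/-- The polytope `F_c^∅ = {x ∈ L(ℝ) : x_{ij} ≤ c_{ij} for all diagonals}`. -/
def TropPoly (n : ℕ) (c : ZMod (n + 3) → ZMod (n + 3) → ℝ) : Set (TropPt n) :=
  {x | ∀ i j, IsDiag n i j → x.x i j ≤ c i j}

/-- `F_c^∅` is a Stasheff polytope: faces reverse inclusions of partial triangulations. -/
def IsStasheff (n : ℕ) (c : ZMod (n + 3) → ZMod (n + 3) → ℝ) : Prop :=
  ∀ T₁ T₂ : PartialTri n, T₁.diags ⊆ T₂.diags → Face n T₂ c ⊆ Face n T₁ c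

/-- A tropicalized cluster monomial: `F(x) = Σ_{{ij}∈T} n_{ij} x_{ij}` for some complete
triangulation `T` and nonnegative integers `n_{ij}` (each unordered pair is counted once,
whence the factor `1/2` in the symmetric double sum). -/
def IsClusterMono (n : ℕ) (F : TropPt n → ℝ) : Prop :=
  ∃ (T : PartialTri n) (m : ZMod (n + 3) → ZMod (n + 3) → ℕ),
    T.diags.card = n ∧ (∀ i j, m i j = m j i) ∧
    (∀ i j, s(i, j) ∉ T.diags → m i j = 0) ∧
    ∀ x : TropPt n, F x =
      (1 / 2) * ∑ i : ZMod (n + 3), ∑ j : ZMod (n + 3), (m i j : ℝ) * x.x i j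

/-- `c_{F,S} = sup_{x∈S} F(x)`. -/
noncomputable def cSup (n : ℕ) (F : TropPt n → ℝ) (S : Set (TropPt n)) : ℝ :=
  sSup (F '' S)

/-- `S` is convex: it equals the set cut out by the inequalities `F(x) ≤ c_{F,S}` over
all tropicalized cluster monomials `F`. -/
def IsConvexSet (n : ℕ) (S : Set (TropPt n)) : Prop :=
  S = {x : TropPt n | ∀ F, IsClusterMono n F → F x ≤ cSup n F S}

/-- The Minkowski sum
`S₁ + S₂ = {x : F(x) ≤ c_{F,S₁} + c_{F,S₂} for all tropicalized cluster monomials F}`. -/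
def MinkSum (n : ℕ) (S₁ S₂ : Set (TropPt n)) : Set (TropPt n) :=
  {x : TropPt n | ∀ F, IsClusterMono n F → F x ≤ cSup n F S₁ + cSup n F S₂}

/-! ### Tropical Plücker relations on a linearly ordered set of vertices -/

/-- The tropical Plücker relations for `w` on the finite set of vertices `V`. The vertices are
linearly ordered (a polygon cut open), and only the values `w i j` with `i < j` matter. No condition
is imposed on the edges of the polygon. -/
def IsTrop (V : Finset ℕ) (w : ℕ → ℕ → ℝ) : Prop :=
  ∀ p ∈ V, ∀ q ∈ V, ∀ r ∈ V, ∀ s ∈ V, p < q → q < r → r < s →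
    w p r + w q s = max (w p q + w r s) (w q r + w p s)

/-- Extends `z` to a vertex `v` with neighbours `a < v < b`, where the values at `(a, v)` and
`(v, b)` are prescribed to be `A` and `B`: the row of `v` is the tropical linear combination of the
rows of `a` and `b` dictated by the Plücker relations. The values at `a` and `b` themselves are
split off because there the formula would require `z a a = z b b = -∞`. -/
noncomputable def extend (z : ℕ → ℕ → ℝ) (a v b : ℕ) (A B : ℝ) (p q : ℕ) : ℝ :=
  if p = v then
    if q = b then B else max (B - z a b + z a q) (A - z a b + z b q)
  else if q = v then
    if p = a then A else max (B - z a b + z p a) (A - z a b + z p b)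
  else z p q

/-- The extended function satisfies the Plücker relations: one involving `v` is the tropical linear
combination of the same relation with `a`, respectively `b`, in place of `v`; one that already
contains `a` (or `b`) needs only the relation for `b` (or `a`), and one that contains both is the
definition of the extension. -/
theorem IsTrop.extend {V : Finset ℕ} {z : ℕ → ℕ → ℝ} {a v b : ℕ} (A B : ℝ)
    (hz : IsTrop (V.erase v) z) (ha : a ∈ V) (hb : b ∈ V) (hav : a < v) (hvb : v < b)
    (hlt : ∀ k ∈ V, k < v → k ≤ a) (hgt : ∀ k ∈ V, v < k → b ≤ k) :
    IsTrop V (extend z a v b A B) := by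
  have hz' : ∀ p ∈ V, ∀ q ∈ V, ∀ r ∈ V, ∀ s ∈ V, p ≠ v → q ≠ v → r ≠ v → s ≠ v →
      p < q → q < r → r < s → z p r + z q s = max (z p q + z r s) (z q r + z p s) := by
    intro p hp q hq r hr s hs h1 h2 h3 h4
    exact hz p (by simp [*]) q (by simp [*]) r (by simp [*]) s (by simp [*])
  intro p hp q hq r hr s hs hpq hqr hrs
  have hav' := hav.ne
  have hvb' := hvb.ne'
  by_cases h1 : p = v
  · subst h1
    have := hgt q hq hpq
    have e1 : q ≠ p := by omega
    have e2 : r ≠ p := by omega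
    have e3 : s ≠ p := by omega
    have e4 : r ≠ b := by omega
    have e5 : s ≠ b := by omega
    have Ra := hz' a ha q hq r hr s hs hav' e1 e2 e3 (by omega) hqr hrs
    by_cases h : q = b
    · simp only [_root_.extend, e2, e3, e4, e5, h, hvb', if_true, if_false]
      rw [h] at Ra
      clear hz hz' hlt hgt
      grind
    · have Rb := hz' b hb q hq r hr s hs hvb' e1 e2 e3 (by omega) hqr hrs
      simp only [_root_.extend, e1, e2, e3, e4, e5, h, if_true, if_false]
      clear hz hz' hlt hgt
      grind
  by_cases h2 : q = v
  · subst h2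
    have := hgt r hr hqr
    have := hlt p hp hpq
    have e2 : r ≠ q := by omega
    have e3 : s ≠ q := by omega
    have e5 : s ≠ b := by omega
    by_cases h : r = b <;> by_cases h' : p = a
    · subst h h'
      simp only [_root_.extend, h1, e2, e3, e5, if_true, if_false]
      clear hz hz' hlt hgt
      grind
    · subst h
      have Ra := hz' p hp a ha r hr s hs h1 hav' e2 e3 (by omega) (by omega) hrs
      simp only [_root_.extend, h1, e2, e3, e5, h', if_true, if_false]
      clear hz hz' hlt hgt
      grind
    · subst h'
      have Rb := hz' p hp b hb r hr s hs h1 hvb' e2 e3 (by omega) (by omega) hrs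
      simp only [_root_.extend, h1, e2, e3, e5, h, if_true, if_false]
      clear hz hz' hlt hgt
      grind
    · have Ra := hz' p hp a ha r hr s hs h1 hav' e2 e3 (by omega) (by omega) hrs
      have Rb := hz' p hp b hb r hr s hs h1 hvb' e2 e3 (by omega) (by omega) hrs
      simp only [_root_.extend, h1, e2, e3, e5, h, h', if_true, if_false]
      clear hz hz' hlt hgt
      grind
  by_cases h3 : r = v
  · subst h3
    have := hgt s hs hrs
    have := hlt q hq hqr
    have e3 : s ≠ r := by omega
    have e5 : p ≠ a := by omega
    by_cases h : s = b <;> by_cases h' : q = a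
    · subst h h'
      simp only [_root_.extend, h1, h2, e3, e5, if_true, if_false]
      clear hz hz' hlt hgt
      grind
    · subst h
      have Ra := hz' p hp q hq a ha s hs h1 h2 hav' e3 (by omega) (by omega) (by omega)
      simp only [_root_.extend, h1, h2, e3, e5, h', if_true, if_false]
      clear hz hz' hlt hgt
      grind
    · subst h'
      have Rb := hz' p hp q hq b hb s hs h1 h2 hvb' e3 (by omega) (by omega) (by omega)
      simp only [_root_.extend, h1, h2, e3, e5, h, if_true, if_false]
      clear hz hz' hlt hgt
      grind
    · have Ra := hz' p hp q hq a ha s hs h1 h2 hav' e3 (by omega) (by omega) (by omega)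
      have Rb := hz' p hp q hq b hb s hs h1 h2 hvb' e3 (by omega) (by omega) (by omega)
      simp only [_root_.extend, h1, h2, e3, e5, h, h', if_true, if_false]
      clear hz hz' hlt hgt
      grind
  by_cases h4 : s = v
  · subst h4
    have := hlt r hr hrs
    have e4 : p ≠ a := by omega
    have e5 : q ≠ a := by omega
    have Rb := hz' p hp q hq r hr b hb h1 h2 h3 hvb' hpq hqr (by omega)
    by_cases h : r = a
    · subst h
      simp only [_root_.extend, h1, h2, h3, e4, e5, if_true, if_false]
      clear hz hz' hlt hgt
      grind
    · have Ra := hz' p hp q hq r hr a ha h1 h2 h3 hav' hpq hqr (by omega)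
      simp only [_root_.extend, h1, h2, h3, e4, e5, h, if_true, if_false]
      clear hz hz' hlt hgt
      grind
  · simp only [_root_.extend, h1, h2, h3, h4, if_false]
    exact hz' p hp q hq r hr s hs h1 h2 h3 h4 hpq hqr hrs

/-- The row of `v` stays below `w₁ + w₂` if the rows of its neighbours `a`, `b` do. -/
theorem extend_le {V : Finset ℕ} {w₁ w₂ z : ℕ → ℕ → ℝ} {a v b : ℕ}
    (h₁ : IsTrop V w₁) (h₂ : IsTrop V w₂) (hv : v ∈ V) (ha : a ∈ V) (hb : b ∈ V)
    (hav : a < v) (hvb : v < b)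
    (hlt : ∀ k ∈ V, k < v → k ≤ a) (hgt : ∀ k ∈ V, v < k → b ≤ k)
    (hab : z a b = w₁ a b + w₂ a b)
    (hle : ∀ i ∈ V.erase v, ∀ j ∈ V.erase v, i < j → z i j ≤ w₁ i j + w₂ i j) :
    ∀ i ∈ V, ∀ j ∈ V, i < j →
      extend z a v b (w₁ a v + w₂ a v) (w₁ v b + w₂ v b) i j ≤ w₁ i j + w₂ i j := by
  have hle' : ∀ i ∈ V, ∀ j ∈ V, i ≠ v → j ≠ v → i < j → z i j ≤ w₁ i j + w₂ i j := by
    intro i hi j hj h1 h2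
    exact hle i (by simp [*]) j (by simp [*])
  intro i hi j hj hij
  have hav' := hav.ne
  have hvb' := hvb.ne'
  by_cases h1 : i = v
  · subst h1
    by_cases h : j = b
    · simp [extend, h]
    have := hgt j hj hij
    simp only [extend, h, if_true, if_false]
    have R₁ := h₁ a ha i hi b hb j hj hav hvb (by omega)
    have R₂ := h₂ a ha i hi b hb j hj hav hvb (by omega)
    have La := hle' a ha j hj hav' (by omega) (by omega)
    have Lb := hle' b hb j hj hvb' (by omega) (by omega)
    have A₁ := le_max_left (w₁ a i + w₁ b j) (w₁ i b + w₁ a j)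
    have A₂ := le_max_left (w₂ a i + w₂ b j) (w₂ i b + w₂ a j)
    have B₁ := le_max_right (w₁ a i + w₁ b j) (w₁ i b + w₁ a j)
    have B₂ := le_max_right (w₂ a i + w₂ b j) (w₂ i b + w₂ a j)
    apply max_le <;> linarith
  by_cases h2 : j = v
  · subst h2
    by_cases h : i = a
    · simp [extend, h, hav']
    have := hlt i hi hij
    simp only [extend, h1, h, if_true, if_false]
    have R₁ := h₁ i hi a ha j hj b hb (by omega) hav hvb
    have R₂ := h₂ i hi a ha j hj b hb (by omega) hav hvb
    have La := hle' i hi a ha h1 hav' (by omega)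
    have Lb := hle' i hi b hb h1 hvb' (by omega)
    have A₁ := le_max_left (w₁ i a + w₁ j b) (w₁ a j + w₁ i b)
    have A₂ := le_max_left (w₂ i a + w₂ j b) (w₂ a j + w₂ i b)
    have B₁ := le_max_right (w₁ i a + w₁ j b) (w₁ a j + w₁ i b)
    have B₂ := le_max_right (w₂ i a + w₂ j b) (w₂ a j + w₂ i b)
    apply max_le <;> linarith
  · simp only [extend, h1, h2, if_false]
    exact hle' i hi j hj h1 h2 hij

/-- Addition in the coordinates of a non-crossing set `T` of chords: there is a tropical point that
equals `w₁ + w₂` on `T` and is at most `w₁ + w₂` everywhere. Besides diagonals, `T` may contain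
edges of the polygon; it is required to contain the edge joining the first and last vertices. -/
theorem exists_add_on_of_noncrossing (w₁ w₂ : ℕ → ℕ → ℝ) (m M : ℕ) (V : Finset ℕ)
    (T : ℕ → ℕ → Prop) (h₁ : IsTrop V w₁) (h₂ : IsTrop V w₂)
    (hm : m ∈ V) (hM : M ∈ V) (hV : ∀ k ∈ V, m ≤ k ∧ k ≤ M) (hT : T m M)
    (hnc : ∀ i ∈ V, ∀ k ∈ V, ∀ j ∈ V, ∀ l ∈ V, i < k → k < j → j < l → T i j → ¬ T k l) :
    ∃ y, IsTrop V y ∧ (∀ i ∈ V, ∀ j ∈ V, i < j → T i j → y i j = w₁ i j + w₂ i j) ∧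
      ∀ i ∈ V, ∀ j ∈ V, i < j → y i j ≤ w₁ i j + w₂ i j := by
  classical
  induction hn : V.card generalizing V T with
  | zero => simp_all
  | succ N ih =>
    by_cases hint : ∃ u ∈ V, m < u ∧ u < M
    · -- A shortest element of `T` with a vertex strictly between its endpoints.
      have hex : ∃ d, ∃ i ∈ V, ∃ j ∈ V, ∃ v ∈ V, T i j ∧ i < v ∧ v < j ∧ j - i = d := by
        obtain ⟨u, hu, hmu, huM⟩ := hint
        exact ⟨_, m, hm, M, hM, u, hu, hT, hmu, huM, rfl⟩
      obtain ⟨i, hi, j, hj, v, hv, hTij, hiv, hvj, hd⟩ := Nat.find_spec hex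
      have hmin : ∀ i' ∈ V, ∀ j' ∈ V, ∀ v' ∈ V, T i' j' → i' < v' → v' < j' →
          j - i ≤ j' - i' := by
        intro i' hi' j' hj' v' hv' hT' hl hr
        rw [hd]
        exact Nat.find_min' hex ⟨i', hi', j', hj', v', hv', hT', hl, hr, rfl⟩
      obtain ⟨a, ha, hamax⟩ := (V.filter (· < v)).exists_max_image id
        ⟨i, by simp [hi, hiv]⟩
      obtain ⟨b, hb, hbmin⟩ := (V.filter (v < ·)).exists_min_image id
        ⟨j, by simp [hj, hvj]⟩
      simp only [Finset.mem_filter, id, and_imp] at ha hb hamax hbmin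
      obtain ⟨ha, hav⟩ := ha
      obtain ⟨hb, hvb⟩ := hb
      obtain ⟨z, hz, hzT, hzle⟩ := ih (V.erase v) (fun p q => T p q ∨ (p = a ∧ q = b))
        (fun p hp q hq r hr s hs => h₁ p (Finset.mem_of_mem_erase hp) q
          (Finset.mem_of_mem_erase hq) r (Finset.mem_of_mem_erase hr) s
          (Finset.mem_of_mem_erase hs))
        (fun p hp q hq r hr s hs => h₂ p (Finset.mem_of_mem_erase hp) q
          (Finset.mem_of_mem_erase hq) r (Finset.mem_of_mem_erase hr) s
          (Finset.mem_of_mem_erase hs))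
        (Finset.mem_erase.2 ⟨by have := hV i hi; omega, hm⟩)
        (Finset.mem_erase.2 ⟨by have := hV j hj; omega, hM⟩)
        (fun k hk => hV k (Finset.mem_of_mem_erase hk)) (Or.inl hT)
        (by
          intro p hp q hq r hr s hs hpq hqr hrs
          rw [Finset.mem_erase] at hp hq hr hs
          rintro (h | ⟨rfl, rfl⟩) (h' | ⟨rfl, rfl⟩)
          · exact hnc p hp.2 q hq.2 r hr.2 s hs.2 hpq hqr hrs h h'
          · rcases lt_or_gt_of_ne hr.1 with h3 | h3
            · have := hamax r hr.2 h3; omega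
            · have := hbmin r hr.2 h3; omega
          · rcases lt_or_gt_of_ne hq.1 with h3 | h3
            · have := hamax q hq.2 h3; omega
            · have := hbmin q hq.2 h3; omega
          · omega)
        (by rw [Finset.card_erase_of_mem hv, hn]; rfl)
      have hab : z a b = w₁ a b + w₂ a b :=
        hzT a (by simp [ha, hav.ne]) b (by simp [hb, hvb.ne']) (by omega) (Or.inr ⟨rfl, rfl⟩)
      refine ⟨extend z a v b (w₁ a v + w₂ a v) (w₁ v b + w₂ v b),
        hz.extend _ _ ha hb hav hvb hamax hbmin, ?_,
        extend_le h₁ h₂ hv ha hb hav hvb hamax hbmin hab hzle⟩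
      intro p hp q hq hpq hTpq
      by_cases h1 : p = v
      · -- By minimality of `(i, j)` and since `T` is non-crossing, `q` is the neighbour `b`.
        subst h1
        have h : q = b := by
          by_contra hqb
          have hbq : b < q := lt_of_le_of_ne (hbmin q hq hpq) (Ne.symm hqb)
          have := hmin p hv q hq b hb hTpq hvb hbq
          exact hnc i hi p hv j hj q hq hiv hvj (by omega) hTij hTpq
        simp [extend, h]
      by_cases h2 : q = v
      · subst h2
        have h : p = a := by
          by_contra hpa
          have hap : p < a := lt_of_le_of_ne (hamax p hp hpq) hpa
          have := hmin p hp q hq a ha hTpq hap hav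
          exact hnc p hp i hi q hv j hj (by omega) hiv hvj hTpq hTij
        simp [extend, h, hav.ne]
      · simp only [extend, h1, h2, if_false]
        exact hzT p (by simp [*]) q (by simp [*]) hpq (Or.inl hTpq)
    · refine ⟨fun i j => w₁ i j + w₂ i j, ?_, fun _ _ _ _ _ _ => rfl, fun _ _ _ _ _ => le_rfl⟩
      intro p hp q hq r hr s hs hpq hqr hrs
      exact absurd ⟨q, hq, by have := hV p hp; omega, by have := hV s hs; omega⟩ hint

/-! ### Passage to the cyclic polygon -/

theorem val_sub_eq (n : ℕ) (i j : ZMod (n + 3)) :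
    (i - j).val = if j.val ≤ i.val then i.val - j.val else i.val + (n + 3) - j.val := by
  have hj := j.val_lt
  split_ifs with h
  · exact ZMod.val_sub h
  · have h' : i - j = -(j - i) := by ring
    have hlt : i.val ≤ j.val := by omega
    have hne : j - i ≠ 0 := by
      intro h0
      rw [sub_eq_zero.1 h0] at h
      exact h le_rfl
    have : NeZero (j - i) := ⟨hne⟩
    rw [h', ZMod.val_neg_of_ne_zero, ZMod.val_sub hlt]
    omega

theorem clockwise_of_val_lt {n : ℕ} {p q r s : ZMod (n + 3)} (h1 : p.val < q.val)
    (h2 : q.val < r.val) (h3 : r.val < s.val) : Clockwise n p q r s := by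
  simp only [Clockwise, val_sub_eq]
  rw [if_pos (by omega), if_pos (by omega), if_pos (by omega)]
  omega

/-- A quadruple in clockwise order is, up to rotation, increasing. -/
theorem Clockwise.val_lt {n : ℕ} {p q r s : ZMod (n + 3)} (h : Clockwise n p q r s) :
    (p.val < q.val ∧ q.val < r.val ∧ r.val < s.val) ∨
    (q.val < r.val ∧ r.val < s.val ∧ s.val < p.val) ∨
    (r.val < s.val ∧ s.val < p.val ∧ p.val < q.val) ∨
    (s.val < p.val ∧ p.val < q.val ∧ q.val < r.val) := by
  have := p.val_lt
  have := q.val_lt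
  have := r.val_lt
  have := s.val_lt
  simp only [Clockwise, val_sub_eq] at h
  split_ifs at h <;> omega

theorem IsEdge.val {n : ℕ} {i j : ZMod (n + 3)} (h : IsEdge n i j) (hlt : i.val < j.val) :
    j.val = i.val + 1 ∨ (i.val = 0 ∧ j.val = n + 2) := by
  have h1 : (1 : ZMod (n + 3)).val = 1 := ZMod.val_one'' (by omega)
  have hi := i.val_lt
  have hj := j.val_lt
  rcases h with h | h
  · have e : (i - j).val = 1 := by rw [h, add_sub_cancel_left, h1]
    rw [val_sub_eq] at e
    split_ifs at e <;> omega
  · have e : (j - i).val = 1 := by rw [h, add_sub_cancel_left, h1]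
    rw [val_sub_eq] at e
    split_ifs at e <;> omega

theorem isEdge_of_val {n : ℕ} {i j : ZMod (n + 3)}
    (h : j.val = i.val + 1 ∨ (i.val = 0 ∧ j.val = n + 2)) : IsEdge n i j := by
  have h1 : (1 : ZMod (n + 3)).val = 1 := ZMod.val_one'' (by omega)
  rcases h with h | ⟨h, h'⟩
  · right
    rw [← sub_eq_iff_eq_add']
    apply ZMod.val_injective
    rw [val_sub_eq, h1, if_pos (by omega)]
    omega
  · left
    rw [← sub_eq_iff_eq_add']
    apply ZMod.val_injective
    rw [val_sub_eq, h1, if_neg (by omega)]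
    omega

/-- The coordinates of a point of `L(ℝ)`, with vertices labelled by `0, …, n + 2`. -/
def TropPt.w {n : ℕ} (x : TropPt n) (i j : ℕ) : ℝ := x.x i j

theorem TropPt.w_val {n : ℕ} (x : TropPt n) (i j : ZMod (n + 3)) : x.w i.val j.val = x.x i j := by
  simp [TropPt.w]

theorem TropPt.isTrop {n : ℕ} (x : TropPt n) : IsTrop (range (n + 3)) x.w := by
  intro p hp q hq r hr s hs h1 h2 h3
  rw [Finset.mem_range] at hp hq hr hs
  apply x.pluecker
  apply clockwise_of_val_lt <;> simpa only [ZMod.val_natCast_of_lt, hp, hq, hr, hs]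

/-- Closes up a linearly ordered tropical point, whose values on the edges of the polygon are `0`,
to a point of `L(ℝ)`. -/
noncomputable def TropPt.ofTrop {n : ℕ} (y : ℕ → ℕ → ℝ) (hy : IsTrop (range (n + 3)) y)
    (h0 : ∀ i j : ZMod (n + 3), i.val < j.val → IsEdge n i j → y i.val j.val = 0) : TropPt n where
  x i j := if i.val < j.val then y i.val j.val else if j.val < i.val then y j.val i.val else 0
  symm i j := by
    rcases lt_trichotomy i.val j.val with h | h | h
    · simp [h, h.le]
    · simp [h]
    · simp [h, h.le]
  diag_zero i := by simp
  edge_zero i j h := by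
    split_ifs with h1 h2
    · exact h0 i j h1 h
    · exact h0 j i h2 h.symm
    · rfl
  pluecker p q r s h := by
    have hy' : ∀ p q r s : ZMod (n + 3), p.val < q.val → q.val < r.val → r.val < s.val →
        y p.val r.val + y q.val s.val =
          max (y p.val q.val + y r.val s.val) (y q.val r.val + y p.val s.val) := by
      intro p q r s
      exact hy _ (by simpa using p.val_lt) _ (by simpa using q.val_lt)
        _ (by simpa using r.val_lt) _ (by simpa using s.val_lt)
    rcases h.val_lt with ⟨h1, h2, h3⟩ | ⟨h1, h2, h3⟩ | ⟨h1, h2, h3⟩ | ⟨h1, h2, h3⟩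
    · have := hy' p q r s h1 h2 h3
      grind
    · have := hy' q r s p h1 h2 h3
      grind
    · have := hy' r s p q h1 h2 h3
      grind
    · have := hy' s p q r h1 h2 h3
      grind

theorem TropPt.ofTrop_x {n : ℕ} {y : ℕ → ℕ → ℝ} (hy : IsTrop (range (n + 3)) y)
    (h0 : ∀ i j : ZMod (n + 3), i.val < j.val → IsEdge n i j → y i.val j.val = 0)
    {i j : ZMod (n + 3)} (h : i.val < j.val) : (TropPt.ofTrop y hy h0).x i j = y i.val j.val :=
  if_pos h

/-- Addition in the coordinates of a partial triangulation `T`: there is a point of `L(ℝ)` whose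
coordinates are the sums of those of `x₁` and `x₂` on `T`, and at most the sums elsewhere. -/
theorem TropPt.exists_add_on {n : ℕ} (T : PartialTri n) (x₁ x₂ : TropPt n) :
    ∃ y : TropPt n, (∀ i j, s(i, j) ∈ T.diags → y.x i j = x₁.x i j + x₂.x i j) ∧
      ∀ i j, y.x i j ≤ x₁.x i j + x₂.x i j := by
  have mem (i : ZMod (n + 3)) : i.val ∈ range (n + 3) := by simpa using i.val_lt
  -- The edges of the polygon are added to `T`, so that `y` vanishes on them.
  obtain ⟨y, hy, hyT, hyle⟩ := exists_add_on_of_noncrossing x₁.w x₂.w 0 (n + 2) (range (n + 3))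
    (fun i j => s((i : ZMod (n + 3)), (j : ZMod (n + 3))) ∈ T.diags ∨ j = i + 1 ∨
      (i = 0 ∧ j = n + 2)) x₁.isTrop x₂.isTrop (by simp) (by simp)
    (fun k hk => by rw [Finset.mem_range] at hk; omega) (by simp)
    (by
      intro p hp q hq r hr s hs hpq hqr hrs h h'
      rw [Finset.mem_range] at hp hq hr hs
      rcases h with h | h
      · rcases h' with h' | h'
        · apply T.noncross _ _ _ _ h h'
          left
          apply clockwise_of_val_lt <;> simpa only [ZMod.val_natCast_of_lt, hp, hq, hr, hs]
        · omega
      · omega)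
  have h0 : ∀ i j : ZMod (n + 3), i.val < j.val → IsEdge n i j → y i.val j.val = 0 := by
    intro i j hij h
    rw [hyT _ (mem i) _ (mem j) hij (Or.inr (h.val hij)), w_val, w_val, x₁.edge_zero i j h,
      x₂.edge_zero i j h, add_zero]
  have hyT' : ∀ i j : ZMod (n + 3), i.val < j.val → s(i, j) ∈ T.diags →
      (ofTrop y hy h0).x i j = x₁.x i j + x₂.x i j := by
    intro i j hij h
    rw [ofTrop_x hy h0 hij, hyT _ (mem i) _ (mem j) hij (Or.inl (by simpa using h)), w_val, w_val]
  have hyle' : ∀ i j : ZMod (n + 3), i.val < j.val →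
      (ofTrop y hy h0).x i j ≤ x₁.x i j + x₂.x i j := by
    intro i j hij
    rw [ofTrop_x hy h0 hij, ← w_val, ← w_val]
    exact hyle _ (mem i) _ (mem j) hij
  refine ⟨ofTrop y hy h0, fun i j h => ?_, fun i j => ?_⟩
  · rcases lt_trichotomy i.val j.val with hij | hij | hij
    · exact hyT' i j hij h
    · obtain rfl := ZMod.val_injective _ hij
      simp [TropPt.diag_zero]
    · rw [TropPt.symm _ i j, x₁.symm i j, x₂.symm i j]
      exact hyT' j i hij (by rwa [Sym2.eq_swap])
  · rcases lt_trichotomy i.val j.val with hij | hij | hij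
    · exact hyle' i j hij
    · obtain rfl := ZMod.val_injective _ hij
      simp [TropPt.diag_zero]
    · rw [TropPt.symm _ i j, x₁.symm i j, x₂.symm i j]
      exact hyle' j i hij

/-! ### Cluster monomials and Minkowski sums -/

theorem IsClusterMono.le_add {n : ℕ} {F : TropPt n → ℝ} (hF : IsClusterMono n F)
    {x₁ x₂ y : TropPt n} (h : ∀ i j, y.x i j ≤ x₁.x i j + x₂.x i j) : F y ≤ F x₁ + F x₂ := by
  obtain ⟨T, m, -, -, -, hF⟩ := hF
  rw [hF, hF, hF, ← mul_add, ← Finset.sum_add_distrib]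
  simp only [← Finset.sum_add_distrib, ← mul_add]
  gcongr
  exact h _ _

theorem cSup_eq_of_isMax {n : ℕ} {F : TropPt n → ℝ} {S : Set (TropPt n)} {x : TropPt n}
    (hx : x ∈ S) (h : ∀ y ∈ S, F y ≤ F x) : cSup n F S = F x :=
  IsGreatest.csSup_eq ⟨⟨x, hx, rfl⟩, by rintro _ ⟨y, hy, rfl⟩; exact h y hy⟩

theorem cSup_minkSum {n : ℕ} {S₁ S₂ : Set (TropPt n)}
    (hatt₁ : ∀ F, IsClusterMono n F → ∃ x ∈ S₁, ∀ y ∈ S₁, F y ≤ F x)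
    (hatt₂ : ∀ F, IsClusterMono n F → ∃ x ∈ S₂, ∀ y ∈ S₂, F y ≤ F x)
    {F : TropPt n → ℝ} (hF : IsClusterMono n F) :
    cSup n F (MinkSum n S₁ S₂) = cSup n F S₁ + cSup n F S₂ := by
  have le_cSup {S : Set (TropPt n)} (hatt : ∀ F, IsClusterMono n F → ∃ x ∈ S, ∀ y ∈ S, F y ≤ F x)
      {G : TropPt n → ℝ} (hG : IsClusterMono n G) {x : TropPt n} (hx : x ∈ S) :
      G x ≤ cSup n G S := by
    obtain ⟨u, hu, hmax⟩ := hatt G hG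
    rw [cSup_eq_of_isMax hu hmax]
    exact hmax x hx
  obtain ⟨x₁, hx₁, hmax₁⟩ := hatt₁ F hF
  obtain ⟨x₂, hx₂, hmax₂⟩ := hatt₂ F hF
  have hc₁ := cSup_eq_of_isMax hx₁ hmax₁
  have hc₂ := cSup_eq_of_isMax hx₂ hmax₂
  obtain ⟨T, m, -, -, hmT, hFm⟩ := id hF
  obtain ⟨y, hyT, hyle⟩ := TropPt.exists_add_on T x₁ x₂
  have hFy : F y = F x₁ + F x₂ := by
    rw [hFm, hFm, hFm, ← mul_add, ← Finset.sum_add_distrib]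
    simp only [← Finset.sum_add_distrib, ← mul_add]
    congr 1
    refine Finset.sum_congr rfl fun i _ => Finset.sum_congr rfl fun j _ => ?_
    by_cases h : s(i, j) ∈ T.diags
    · rw [hyT i j h]
    · simp [hmT i j h]
  have hyS : y ∈ MinkSum n S₁ S₂ := fun G hG =>
    (hG.le_add hyle).trans (add_le_add (le_cSup hatt₁ hG hx₁) (le_cSup hatt₂ hG hx₂))
  rw [hc₁, hc₂, ← hFy]
  refine cSup_eq_of_isMax hyS fun u hu => ?_
  rw [hFy, ← hc₁, ← hc₂]
  exact hu F hF

/-- If `S₁, S₂, S₃` are nonempty convex subsets of `L(ℝ)` on which every tropicalized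
cluster monomial attains a (finite) supremum, then `c_{F,S₁+S₂} = c_{F,S₁} + c_{F,S₂}`
for every tropicalized cluster monomial `F`, and the Minkowski sum is associative. -/
theorem cSup_minkSum_add_and_minkSum_assoc
    (n : ℕ) (hn : 1 ≤ n) (S₁ S₂ S₃ : Set (TropPt n))
    (hne₁ : S₁.Nonempty) (hne₂ : S₂.Nonempty) (hne₃ : S₃.Nonempty)
    (hcv₁ : IsConvexSet n S₁) (hcv₂ : IsConvexSet n S₂) (hcv₃ : IsConvexSet n S₃)
    (hatt₁ : ∀ F, IsClusterMono n F → ∃ x ∈ S₁, ∀ y ∈ S₁, F y ≤ F x)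
    (hatt₂ : ∀ F, IsClusterMono n F → ∃ x ∈ S₂, ∀ y ∈ S₂, F y ≤ F x)
    (hatt₃ : ∀ F, IsClusterMono n F → ∃ x ∈ S₃, ∀ y ∈ S₃, F y ≤ F x) :
    (∀ F, IsClusterMono n F →
        cSup n F (MinkSum n S₁ S₂) = cSup n F S₁ + cSup n F S₂)
    ∧ MinkSum n (MinkSum n S₁ S₂) S₃ = MinkSum n S₁ (MinkSum n S₂ S₃) := by
  refine ⟨fun F hF => cSup_minkSum hatt₁ hatt₂ hF, ?_⟩
  ext x
  refine forall₂_congr fun F hF => ?_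
  rw [cSup_minkSum hatt₁ hatt₂ hF, cSup_minkSum hatt₂ hatt₃ hF, add_assoc]
end

section
/- Let l_1, …, l_m ∈ L(ℝ) and define c = (c_{ij}) by c_{ij} = Σ_{k=1}^m (l_k)_{ij} for every diagonal {ij}. Then the polytope F_c^∅ = {x ∈ L(ℝ) : x_{ij} ≤ c_{ij} for all diagonals {ij}} is a Stasheff polytope, i.e. for all partial triangulations T_1 ⊆ T_2 one has F_c^{T_2} ⊆ F_c^{T_1}. -/
/-!
Write `d = ∑ k, l k` on all pairs of vertices, so that `d` vanishes on edges and agrees with `c` on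
diagonals. A sum of maxima dominates the maximum of the sums, so for `p, q, r, s` in clockwise order
`d p r + d q s` is at least `d p q + d r s` and at least `d q r + d p s` (`sum_pluecker_ge`).

Let `x` lie in the face of a partial triangulation `T`. Then `x ≤ d` on all segments, by induction on
the number of diagonals of `T` that a segment crosses (`face_le`). A segment crossing none is an
edge, a diagonal of `T` or a member of `S(T)`. If `{p r}` crosses `{q s} ∈ T`, the four sides of the
quadrilateral `p q r s` cross strictly fewer diagonals of `T` than `{p r}` does: a diagonal of `T`
crossing a side does not cross `{q s}`, hence crosses `{p r}` (`cross_of_cross_side`), while `{q s}`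
itself crosses `{p r}` and no side. So the Plücker relation for `x` and the inequalities for `d`
give `x p r + x q s ≤ d p r + d q s`, and `x q s = d q s`.

Hence every face lies in `F_c^∅`, which gives the reversal of inclusions at once.
-/

open Finset

theorem zmod_val_sub (n : ℕ) (a b : ZMod (n + 3)) :
    (a - b).val = if b.val ≤ a.val then a.val - b.val else a.val + (n + 3) - b.val := by
  have ha := ZMod.val_lt a
  have hb := ZMod.val_lt b
  split_ifs with h
  · exact ZMod.val_sub h
  · rw [sub_eq_add_neg, ZMod.val_add, ZMod.neg_val]
    have hb0 : b ≠ 0 := by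
      rintro rfl
      simp at h
    rw [if_neg hb0, Nat.mod_eq_of_lt (by omega)]
    omega

/-- Clockwise order in terms of the representatives in `{0, …, n + 2}`: one of the four cyclic
rotations is increasing. This reduces all statements on crossings to linear arithmetic. -/
theorem clockwise_iff (n : ℕ) (p q r s : ZMod (n + 3)) :
    Clockwise n p q r s ↔
      (p.val < q.val ∧ q.val < r.val ∧ r.val < s.val) ∨
      (q.val < r.val ∧ r.val < s.val ∧ s.val < p.val) ∨
      (r.val < s.val ∧ s.val < p.val ∧ p.val < q.val) ∨
      (s.val < p.val ∧ p.val < q.val ∧ q.val < r.val) := by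
  have hp := ZMod.val_lt p
  have hq := ZMod.val_lt q
  have hr := ZMod.val_lt r
  have hs := ZMod.val_lt s
  unfold Clockwise
  rw [zmod_val_sub, zmod_val_sub, zmod_val_sub]
  split_ifs <;> omega

theorem Clockwise.rotate {n : ℕ} {p q r s : ZMod (n + 3)} (h : Clockwise n p q r s) :
    Clockwise n q r s p := by
  rw [clockwise_iff] at *
  omega

theorem cross_comm (n : ℕ) (i j k l : ZMod (n + 3)) : Cross n i j k l ↔ Cross n k l i j := by
  unfold Cross
  constructor
  · rintro (h | h)
    · exact Or.inr h.rotate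
    · exact Or.inl h.rotate.rotate.rotate
  · rintro (h | h)
    · exact Or.inr h.rotate
    · exact Or.inl h.rotate.rotate.rotate

theorem Cross.swap_right {n : ℕ} {i j k l : ZMod (n + 3)} (h : Cross n i j k l) :
    Cross n i j l k := Or.symm h

theorem Cross.swap_left {n : ℕ} {i j k l : ZMod (n + 3)} (h : Cross n i j k l) :
    Cross n j i k l := (cross_comm ..).1 ((cross_comm ..).1 h).swap_right

theorem cross_of_cross_pq (n : ℕ) {p q r s u v : ZMod (n + 3)} (h : Clockwise n p q r s)
    (h1 : Cross n p q u v) (h2 : ¬ Cross n q s u v) : Cross n p r u v := by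
  have aux : ∀ u v, Clockwise n p u q v → Clockwise n p u r v ∨ Clockwise n q v s u := by
    intro u v h1
    by_cases hv : (r - p).val < (v - p).val
    · exact Or.inl ⟨h1.1, h1.2.1.trans h.2.1, hv⟩
    · right
      -- `v` lies in the arc from `q` to `r`, and `u` in the arc from `p` to `q`
      have h3 : Clockwise n p q v s := ⟨h.1, h1.2.2, (not_lt.1 hv).trans_lt h.2.2⟩
      rw [clockwise_iff] at *
      omega
  rcases h1 with h1 | h1
  · rcases aux u v h1 with h3 | h3
    · exact Or.inl h3
    · exact absurd (Or.inr h3) h2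
  · rcases aux v u h1 with h3 | h3
    · exact Or.inr h3
    · exact absurd (Or.inl h3) h2

theorem cross_of_cross_qr (n : ℕ) {p q r s u v : ZMod (n + 3)} (h : Clockwise n p q r s)
    (h1 : Cross n q r u v) (h2 : ¬ Cross n q s u v) : Cross n p r u v := by
  have aux : ∀ u v, Clockwise n q u r v → Clockwise n p u r v ∨ Clockwise n q u s v := by
    intro u v h1
    have h' := h.rotate
    by_cases hv : (s - q).val < (v - q).val
    · exact Or.inr ⟨h1.1, h1.2.1.trans h'.2.1, hv⟩
    · left
      -- `v` lies in the arc from `r` to `s`, and `u` in the arc from `q` to `r`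
      have h3 : Clockwise n q r v p := ⟨h'.1, h1.2.2, (not_lt.1 hv).trans_lt h'.2.2⟩
      rw [clockwise_iff] at *
      omega
  rcases h1 with h1 | h1
  · rcases aux u v h1 with h3 | h3
    · exact Or.inl h3
    · exact absurd (Or.inl h3) h2
  · rcases aux v u h1 with h3 | h3
    · exact Or.inr h3
    · exact absurd (Or.inr h3) h2

/-- A segment `{u v}` that crosses a side `{a b}` of the quadrilateral `p q r s` but not the
diagonal `{q s}` crosses the other diagonal `{p r}`. -/
theorem cross_of_cross_side (n : ℕ) {p q r s a b u v : ZMod (n + 3)}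
    (h : Clockwise n p q r s)
    (hab : (a = p ∧ b = q) ∨ (a = r ∧ b = s) ∨ (a = q ∧ b = r) ∨ (a = p ∧ b = s))
    (h1 : Cross n a b u v) (h2 : ¬ Cross n q s u v) : Cross n p r u v := by
  have h' := h.rotate.rotate
  have h2' : ¬ Cross n s q u v := fun hx => h2 hx.swap_left
  rcases hab with ⟨rfl, rfl⟩ | ⟨rfl, rfl⟩ | ⟨rfl, rfl⟩ | ⟨rfl, rfl⟩
  · exact cross_of_cross_pq n h h1 h2
  · exact (cross_of_cross_pq n h' h1 h2').swap_left
  · exact cross_of_cross_qr n h h1 h2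
  · exact (cross_of_cross_qr n h' h1.swap_left h2').swap_left

theorem not_cross_side (n : ℕ) {p q r s a b : ZMod (n + 3)}
    (hab : (a = p ∧ b = q) ∨ (a = r ∧ b = s) ∨ (a = q ∧ b = r) ∨ (a = p ∧ b = s)) :
    ¬ Cross n a b q s := by
  simp only [Cross, clockwise_iff]
  rcases hab with ⟨rfl, rfl⟩ | ⟨rfl, rfl⟩ | ⟨rfl, rfl⟩ | ⟨rfl, rfl⟩ <;> omega

open Classical in
/-- The ordered pairs `(u, v)` such that `{u v}` belongs to `T` and crosses `{a b}`; each crossing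
diagonal is represented by two pairs, which is harmless for an induction measure. -/
noncomputable def crossSet (n : ℕ) (T : PartialTri n) (a b : ZMod (n + 3)) :
    Finset (ZMod (n + 3) × ZMod (n + 3)) :=
  Finset.univ.filter fun w => s(w.1, w.2) ∈ T.diags ∧ Cross n a b w.1 w.2

theorem crossSet_card_lt (n : ℕ) (T : PartialTri n) {p q r s a b : ZMod (n + 3)}
    (h : Clockwise n p q r s) (hT : s(q, s) ∈ T.diags)
    (hab : (a = p ∧ b = q) ∨ (a = r ∧ b = s) ∨ (a = q ∧ b = r) ∨ (a = p ∧ b = s)) :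
    (crossSet n T a b).card < (crossSet n T p r).card := by
  apply Finset.card_lt_card
  rw [Finset.ssubset_iff_of_subset]
  · refine ⟨(q, s), ?_, ?_⟩
    · simp only [crossSet, Finset.mem_filter, Finset.mem_univ, true_and]
      exact ⟨hT, Or.inl h⟩
    · simp only [crossSet, Finset.mem_filter, Finset.mem_univ, true_and]
      exact fun hx => not_cross_side n hab hx.2
  · rintro ⟨u, v⟩ hw
    simp only [crossSet, Finset.mem_filter, Finset.mem_univ, true_and] at hw ⊢
    exact ⟨hw.1, cross_of_cross_side n h hab hw.2 (T.noncross _ _ _ _ hT hw.1)⟩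

theorem sum_pluecker_ge (n m : ℕ) (l : Fin m → TropPt n) {p q r s : ZMod (n + 3)}
    (h : Clockwise n p q r s) :
    max (∑ k, (l k).x p q + ∑ k, (l k).x r s) (∑ k, (l k).x q r + ∑ k, (l k).x p s)
      ≤ ∑ k, (l k).x p r + ∑ k, (l k).x q s := by
  simp only [← Finset.sum_add_distrib]
  refine max_le (Finset.sum_le_sum fun k _ => ?_) (Finset.sum_le_sum fun k _ => ?_)
  · rw [(l k).pluecker p q r s h]
    exact le_max_left _ _
  · rw [(l k).pluecker p q r s h]
    exact le_max_right _ _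

/-- A point of the face of `T` is bounded by `∑ k, l k` on every segment, whether or not the
segment crosses `T`. -/
theorem face_le (n m : ℕ) (l : Fin m → TropPt n) (c : ZMod (n + 3) → ZMod (n + 3) → ℝ)
    (hc : ∀ i j, IsDiag n i j → c i j = ∑ k, (l k).x i j) (T : PartialTri n) (x : TropPt n)
    (hx : x ∈ Face n T c) (i j : ZMod (n + 3)) : x.x i j ≤ ∑ k, (l k).x i j := by
  induction hM : (crossSet n T i j).card using Nat.strong_induction_on generalizing i j with
  | _ M ih =>
    subst hM
    by_cases hd : IsDiag n i j
    swap
    · have h0 : ∀ y : TropPt n, y.x i j = 0 := by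
        intro y
        by_cases hij : i = j
        · rw [hij, y.diag_zero]
        · exact y.edge_zero i j (by_contra fun he => hd ⟨hij, he⟩)
      simp [h0]
    have key : ∀ k l', s(k, l') ∈ T.diags → Clockwise n i k j l' →
        x.x i j ≤ ∑ a, (l a).x i j := by
      intro k l' hkl h
      have hlt {a b} hab := crossSet_card_lt n T (a := a) (b := b) h hkl hab
      have h1 := ih _ (hlt (a := i) (b := k) (by simp)) i k rfl
      have h2 := ih _ (hlt (a := j) (b := l') (by simp)) j l' rfl
      have h3 := ih _ (hlt (a := k) (b := j) (by simp)) k j rfl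
      have h4 := ih _ (hlt (a := i) (b := l') (by simp)) i l' rfl
      have hxkl : x.x k l' = ∑ a, (l a).x k l' :=
        (hx.1 k l' hkl).trans (hc k l' (T.mem_isDiag k l' hkl))
      have hmax := max_le_max (add_le_add h1 h2) (add_le_add h3 h4)
      rw [← x.pluecker i k j l' h] at hmax
      have := hmax.trans (sum_pluecker_ge n m l h)
      linarith
    by_cases hT : s(i, j) ∈ T.diags
    · exact ((hx.1 i j hT).trans (hc i j hd)).le
    by_cases hcr : ∃ k l', s(k, l') ∈ T.diags ∧ Cross n i j k l'
    · obtain ⟨k, l', hkl, h | h⟩ := hcr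
      · exact key k l' hkl h
      · exact key l' k (Sym2.eq_swap ▸ hkl) h
    · rw [← hc i j hd]
      refine hx.2 i j ⟨hd, hT, fun k l' hkl => ?_⟩
      exact ⟨fun h => hcr ⟨k, l', hkl, h⟩,
        fun h => hcr ⟨k, l', hkl, (cross_comm n i j k l').2 h⟩⟩

/-- If `c_{ij} = Σ_k (l_k)_{ij}` for the diagonals, then `F_c^∅` is a Stasheff polytope:
`F_c^{T₂} ⊆ F_c^{T₁}` whenever `T₁ ⊆ T₂`. -/
theorem minkowskiSum_of_points_isStasheff
    (n : ℕ) (hn : 1 ≤ n) (m : ℕ) (l : Fin m → TropPt n)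
    (c : ZMod (n + 3) → ZMod (n + 3) → ℝ)
    (hc : ∀ i j, IsDiag n i j → c i j = ∑ k, (l k).x i j) :
    IsStasheff n c := by
  intro T₁ T₂ hT x hx
  refine ⟨fun i j hij => hx.1 i j (hT hij), fun i j hij => ?_⟩
  rw [hc i j hij.1]
  exact face_le n m l c hc T₂ x hx i j
end

section
/- Let l_1, …, l_m ∈ L(ℝ) and define c_{ij} = Σ_{k=1}^m (l_k)_{ij} for every diagonal {ij}. Then F_c^∅ = {x ∈ L(ℝ) : x_{ij} ≤ c_{ij} for all diagonals {ij}} equals the Minkowski sum of the points l_1,…,l_m, namely F_c^∅ = {x ∈ L(ℝ) : F(x) ≤ Σ_{k=1}^m F(l_k) for every tropicalized cluster monomial F}. -/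
/-!
A diagonal coordinate `x ↦ x i j` is itself a tropicalized cluster monomial, because the diagonal
`{i j}` lies in the fan triangulation at `i`, made of all `n` diagonals through `i`: any two of
them share an endpoint, so they do not cross. Hence the cluster monomial inequalities contain the
inequalities `x i j ≤ c i j`. Conversely, a cluster monomial is a nonnegative combination of
diagonal coordinates, and the sum of its values at the `l k` is the same combination of the
`c i j`; its inequality is therefore that combination of the inequalities `x i j ≤ c i j`.
-/

open Finset

/-- The vertices that do not form a diagonal with `i` are `i`, `i + 1` and `i - 1`, and these are
pairwise distinct because `1` and `2` are nonzero modulo `n + 3`. -/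
theorem card_isDiag (n : ℕ) (i : ZMod (n + 3)) [DecidablePred (IsDiag n i)] :
    (univ.filter (IsDiag n i)).card = n := by
  have h1 : (1 : ZMod (n + 3)) ≠ 0 := by
    intro h
    have h' : ((1 : ℕ) : ZMod (n + 3)) = 0 := by exact_mod_cast h
    rw [ZMod.natCast_eq_zero_iff] at h'
    have := Nat.le_of_dvd (by norm_num) h'
    omega
  have h2 : (2 : ZMod (n + 3)) ≠ 0 := by
    intro h
    have h' : ((2 : ℕ) : ZMod (n + 3)) = 0 := by exact_mod_cast h
    rw [ZMod.natCast_eq_zero_iff] at h'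
    have := Nat.le_of_dvd (by norm_num) h'
    omega
  have hS : univ.filter (IsDiag n i) = ({i, i + 1, i - 1} : Finset (ZMod (n + 3)))ᶜ := by
    ext b
    simp only [mem_filter, mem_univ, true_and, mem_compl, mem_insert, mem_singleton, IsDiag,
      IsEdge, eq_sub_iff_add_eq, not_or, ne_eq, eq_comm (a := b) (b := i),
      eq_comm (a := b + 1) (b := i)]
    tauto
  have hcard : ({i, i + 1, i - 1} : Finset (ZMod (n + 3))).card = 3 := by
    rw [card_eq_three]
    refine ⟨i, i + 1, i - 1, ?_, ?_, ?_, rfl⟩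
    · intro h; exact h1 (by linear_combination -h)
    · intro h; exact h1 (by linear_combination h)
    · intro h; exact h2 (by linear_combination h)
  rw [hS, card_compl, hcard, ZMod.card]
  omega

/-- Crossing diagonals have no endpoint in common. -/
theorem Cross.disjoint {n : ℕ} {a b c d : ZMod (n + 3)} (h : Cross n a b c d) :
    a ≠ c ∧ a ≠ d ∧ b ≠ c ∧ b ≠ d := by
  rcases h with ⟨h1, h2, h3⟩ | ⟨h1, h2, h3⟩ <;> refine ⟨?_, ?_, ?_, ?_⟩ <;> rintro rfl <;>
    simp at h1 h2 h3

open Classical in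
/-- The fan triangulation at the vertex `i`: all diagonals having `i` as an endpoint. -/
noncomputable def fanTri (n : ℕ) (i : ZMod (n + 3)) : PartialTri n where
  diags := (univ.filter (IsDiag n i)).image fun b => s(i, b)
  mem_isDiag := by
    intro a b h
    obtain ⟨k, hk, he⟩ := mem_image.1 h
    have hk : IsDiag n i k := (mem_filter.1 hk).2
    rcases Sym2.eq_iff.1 he with ⟨rfl, rfl⟩ | ⟨rfl, rfl⟩
    · exact hk
    · exact ⟨hk.1.symm, fun h => hk.2 h.symm⟩
  noncross := by
    intro a b c d hab hcd hX
    obtain ⟨k, -, hk⟩ := mem_image.1 hab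
    obtain ⟨k', -, hk'⟩ := mem_image.1 hcd
    obtain ⟨h1, h2, h3, h4⟩ := hX.disjoint
    rcases Sym2.eq_iff.1 hk with ⟨rfl, rfl⟩ | ⟨rfl, rfl⟩ <;>
      rcases Sym2.eq_iff.1 hk' with ⟨rfl, rfl⟩ | ⟨rfl, rfl⟩ <;> contradiction

theorem mem_fanTri {n : ℕ} {i j : ZMod (n + 3)} (h : IsDiag n i j) :
    s(i, j) ∈ (fanTri n i).diags := by
  classical
  exact mem_image.2 ⟨j, by simpa using h, rfl⟩

theorem card_fanTri (n : ℕ) (i : ZMod (n + 3)) : (fanTri n i).diags.card = n := by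
  classical
  have hinj : Function.Injective fun b : ZMod (n + 3) => s(i, b) :=
    fun _ _ h => Sym2.congr_right.1 h
  rw [fanTri, card_image_of_injective _ hinj, card_isDiag]

/-- The exponents are supported on `(i, j)` and `(j, i)`; the factor `1/2` in `IsClusterMono`
compensates for counting the diagonal twice. -/
theorem isClusterMono_coord {n : ℕ} {i j : ZMod (n + 3)} (h : IsDiag n i j) :
    IsClusterMono n fun x => x.x i j := by
  refine ⟨fanTri n i,
    fun a b => (if a = i then if b = j then 1 else 0 else 0) +
      (if a = j then if b = i then 1 else 0 else 0), card_fanTri n i, ?_, ?_, ?_⟩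
  · intro a b
    beta_reduce
    split_ifs <;> simp_all
  · intro a b hab
    have h1 : ¬ (a = i ∧ b = j) := by
      rintro ⟨rfl, rfl⟩
      exact hab (mem_fanTri h)
    have h2 : ¬ (a = j ∧ b = i) := by
      rintro ⟨rfl, rfl⟩
      exact hab (Sym2.eq_swap ▸ mem_fanTri h)
    beta_reduce
    rw [← ite_and, ← ite_and, if_neg h1, if_neg h2]
  · intro x
    have := x.symm i j
    simp [add_mul, sum_add_distrib, ite_mul, Finset.sum_ite_irrel]
    linarith

/-- With `c_{ij} = Σ_k (l_k)_{ij}` on diagonals, the polytope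
`F_c^∅ = {x : x_{ij} ≤ c_{ij} for all diagonals}` equals the Minkowski sum of the
points `l₁, …, l_m`, i.e. the set of `x` with `F(x) ≤ Σ_k F(l_k)` for every
tropicalized cluster monomial `F`. -/
theorem poly_eq_minkowskiSum_of_points
    (n : ℕ) (hn : 1 ≤ n) (m : ℕ) (l : Fin m → TropPt n)
    (c : ZMod (n + 3) → ZMod (n + 3) → ℝ)
    (hc : ∀ i j, IsDiag n i j → c i j = ∑ k, (l k).x i j) :
    TropPoly n c =
      {x : TropPt n | ∀ F, IsClusterMono n F → F x ≤ ∑ k, F (l k)} := by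
  ext x
  constructor
  · rintro hx F ⟨T, w, -, -, hw, hF⟩
    have key : ∑ k, F (l k) = (1 / 2) * ∑ i, ∑ j, (w i j : ℝ) * ∑ k, (l k).x i j := by
      simp only [hF, ← mul_sum]
      congr 1
      rw [sum_comm]
      refine sum_congr rfl fun i _ => ?_
      rw [sum_comm]
      exact sum_congr rfl fun j _ => (mul_sum _ _ _).symm
    rw [key, hF]
    gcongr (1 / 2) * ∑ i, ∑ j, ?_ with i _ j _
    by_cases hij : s(i, j) ∈ T.diags
    · have hd := T.mem_isDiag i j hij
      rw [← hc i j hd]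
      exact mul_le_mul_of_nonneg_left (hx i j hd) (Nat.cast_nonneg _)
    · simp [hw i j hij]
  · intro hx i j hd
    rw [hc i j hd]
    exact hx _ (isClusterMono_coord hd)
end

section
/- If x, l ∈ L(ℝ) satisfy x_{ij} ≤ l_{ij} for every diagonal {ij}, then x = l. Equivalently, every single point set {l} ⊂ L(ℝ) is convex: no other tropical point satisfies all the defining inequalities of the convex hull of {l}. -/
/-!
Put `f = l - x`, which is nonnegative on all pairs and vanishes on edges. The relation for
`i, i + 1, i + d, i + d + 1` reads
`x i (i + d) + x (i + 1) (i + d + 1) = max 0 (x (i + 1) (i + d) + x i (i + d + 1))`,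
two of its segments being edges. Since `t ↦ max 0 t` is monotone and 1-Lipschitz, subtracting it
for `x` from the one for `l` bounds the left side of `f` by
`f (i + 1) (i + d) + f i (i + d + 1)`. Summing over `i`, the totals `D d = ∑ i, f i (i + d)`
satisfy `2 * D d ≤ D (d - 1) + D (d + 1)` (`two_mul_diffSum_le`): they are convex in `d`. As they
are nonnegative and vanish at `d = 1` and at `d = n + 2`, they all vanish, and so does each
nonnegative summand.
-/

open Finset

/-- The total of `l - x` over all vertices `i` paired with the vertex `d` steps after `i`. A segment
with endpoints `d` steps apart contributes to step `d` and, from its other end, to step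
`n + 3 - d`. -/
noncomputable def diffSum (n : ℕ) (x l : TropPt n) (d : ℕ) : ℝ :=
  ∑ i : ZMod (n + 3), (l.x i (i + d) - x.x i (i + d))

/-- The relation for two edges `{i, i + 1}` and `{i + d, i + d + 1}`; `d = m + 2`. -/
lemma TropPt.edge_rel {n : ℕ} (x : TropPt n) (m : ℕ) (hm : m + 2 ≤ n + 1) (i : ZMod (n + 3)) :
    x.x i (i + (m + 2 : ℕ)) + x.x (i + 1) (i + 1 + (m + 2 : ℕ)) =
      max 0 (x.x (i + 1) (i + 1 + (m + 1 : ℕ)) + x.x i (i + (m + 3 : ℕ))) := by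
  have e1 : i + 1 + ((m + 1 : ℕ) : ZMod (n + 3)) = i + (m + 2 : ℕ) := by push_cast; ring
  have e2 : i + 1 + ((m + 2 : ℕ) : ZMod (n + 3)) = i + (m + 3 : ℕ) := by push_cast; ring
  have hc : Clockwise n i (i + 1) (i + (m + 2 : ℕ)) (i + (m + 3 : ℕ)) := by
    have h1 : (i + 1 - i).val = 1 := by
      rw [add_sub_cancel_left, ← Nat.cast_one, ZMod.val_natCast_of_lt (by omega)]
    refine ⟨?_, ?_, ?_⟩
    · omega
    · rw [h1, add_sub_cancel_left, ZMod.val_natCast_of_lt (by omega)]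
      omega
    · rw [add_sub_cancel_left, add_sub_cancel_left, ZMod.val_natCast_of_lt (by omega),
        ZMod.val_natCast_of_lt (by omega)]
      omega
  have hp := x.pluecker _ _ _ _ hc
  rw [x.edge_zero i (i + 1) (Or.inr rfl),
    x.edge_zero (i + (m + 2 : ℕ)) (i + (m + 3 : ℕ)) (Or.inr (by push_cast; ring)), add_zero] at hp
  rw [e1, e2]
  exact hp

lemma diff_nonneg {n : ℕ} {x l : TropPt n} (h : ∀ i j, IsDiag n i j → x.x i j ≤ l.x i j)
    (i j : ZMod (n + 3)) : 0 ≤ l.x i j - x.x i j := by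
  by_cases hij : i = j
  · subst hij
    simp [x.diag_zero, l.diag_zero]
  by_cases he : IsEdge n i j
  · simp [x.edge_zero i j he, l.edge_zero i j he]
  · exact sub_nonneg.2 (h i j ⟨hij, he⟩)

lemma diffSum_nonneg {n : ℕ} {x l : TropPt n} (h : ∀ i j, IsDiag n i j → x.x i j ≤ l.x i j)
    (d : ℕ) : 0 ≤ diffSum n x l d :=
  Finset.sum_nonneg fun _ _ => diff_nonneg h _ _

/-- `diffSum` is invariant under rotating the polygon by one step. -/
lemma diffSum_shift {n : ℕ} (x l : TropPt n) (d : ℕ) :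
    ∑ i : ZMod (n + 3), (l.x (i + 1) (i + 1 + d) - x.x (i + 1) (i + 1 + d)) = diffSum n x l d :=
  Equiv.sum_comp (Equiv.addRight (1 : ZMod (n + 3))) fun i => l.x i (i + d) - x.x i (i + d)

lemma two_mul_diffSum_le {n : ℕ} {x l : TropPt n}
    (h : ∀ i j, IsDiag n i j → x.x i j ≤ l.x i j) (m : ℕ) (hm : m + 2 ≤ n + 1) :
    2 * diffSum n x l (m + 2) ≤ diffSum n x l (m + 1) + diffSum n x l (m + 3) := by
  rw [two_mul]
  nth_rewrite 2 [← diffSum_shift]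
  rw [← diffSum_shift x l (m + 1)]
  unfold diffSum
  rw [← Finset.sum_add_distrib, ← Finset.sum_add_distrib]
  refine Finset.sum_le_sum fun i _ => ?_
  have hx := x.edge_rel m hm i
  have hl := l.edge_rel m hm i
  have h1 := diff_nonneg h (i + 1) (i + 1 + (m + 1 : ℕ))
  have h2 := diff_nonneg h i (i + (m + 3 : ℕ))
  have h3 : max 0 (l.x (i + 1) (i + 1 + (m + 1 : ℕ)) + l.x i (i + (m + 3 : ℕ))) ≤
      max 0 (x.x (i + 1) (i + 1 + (m + 1 : ℕ)) + x.x i (i + (m + 3 : ℕ))) +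
        ((l.x (i + 1) (i + 1 + (m + 1 : ℕ)) + l.x i (i + (m + 3 : ℕ))) -
          (x.x (i + 1) (i + 1 + (m + 1 : ℕ)) + x.x i (i + (m + 3 : ℕ)))) := by
    refine max_le ?_ ?_
    · linarith [le_max_left 0 (x.x (i + 1) (i + 1 + (m + 1 : ℕ)) + x.x i (i + (m + 3 : ℕ)))]
    · linarith [le_max_right 0 (x.x (i + 1) (i + 1 + (m + 1 : ℕ)) + x.x i (i + (m + 3 : ℕ)))]
  linarith

lemma diffSum_one {n : ℕ} (x l : TropPt n) : diffSum n x l 1 = 0 :=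
  Finset.sum_eq_zero fun i _ => by
    rw [x.edge_zero _ _ (Or.inr (by simp)), l.edge_zero _ _ (Or.inr (by simp)), sub_zero]

lemma diffSum_last {n : ℕ} (x l : TropPt n) : diffSum n x l (n + 2) = 0 :=
  Finset.sum_eq_zero fun i _ => by
    have he : IsEdge n i (i + (n + 2 : ℕ)) := by
      left
      have h0 : ((n + 3 : ℕ) : ZMod (n + 3)) = 0 := ZMod.natCast_self _
      rw [add_assoc, ← Nat.cast_succ, h0, add_zero]
    rw [x.edge_zero _ _ he, l.edge_zero _ _ he, sub_zero]

/-- Convexity propagates the first increment, which is nonnegative because `diffSum` starts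
from `0` at `d = 1`. -/
lemma diffSum_le_succ {n : ℕ} {x l : TropPt n}
    (h : ∀ i j, IsDiag n i j → x.x i j ≤ l.x i j) (m : ℕ) (hm : m ≤ n) :
    diffSum n x l (m + 1) ≤ diffSum n x l (m + 2) := by
  induction m with
  | zero => exact (diffSum_one x l).trans_le (diffSum_nonneg h _)
  | succ k ih =>
    have := ih (by omega)
    have := two_mul_diffSum_le h k (by omega)
    change diffSum n x l (k + 2) ≤ diffSum n x l (k + 3)
    linarith

lemma diffSum_eq_zero {n : ℕ} {x l : TropPt n}
    (h : ∀ i j, IsDiag n i j → x.x i j ≤ l.x i j) (m : ℕ) (hm : m ≤ n + 1) :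
    diffSum n x l (m + 1) = 0 := by
  induction hm using Nat.decreasingInduction with
  | self => exact diffSum_last x l
  | of_succ k hk ih =>
    exact le_antisymm (ih ▸ diffSum_le_succ h k (by omega)) (diffSum_nonneg h _)

/-- If `x, l ∈ L(ℝ)` satisfy `x_{ij} ≤ l_{ij}` for every diagonal `{ij}`, then `x = l`:
every single point set `{l} ⊂ L(ℝ)` is convex. -/
theorem singleton_is_convex
    (n : ℕ) (hn : 1 ≤ n) (x l : TropPt n)
    (h : ∀ i j, IsDiag n i j → x.x i j ≤ l.x i j) :
    x = l := by
  have key : x.x = l.x := by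
    funext i j
    by_cases hij : i = j
    · rw [hij, x.diag_zero, l.diag_zero]
    have hlt := ZMod.val_lt (j - i)
    have hne : (j - i).val ≠ 0 := by
      rw [Ne, ZMod.val_eq_zero, sub_eq_zero]
      exact fun e => hij e.symm
    obtain ⟨m, hm⟩ := Nat.exists_eq_succ_of_ne_zero hne
    have hz := diffSum_eq_zero h m (by omega)
    have hi := (Finset.sum_eq_zero_iff_of_nonneg fun i _ => diff_nonneg h i _).1 hz i
      (Finset.mem_univ i)
    have hj : i + ((m + 1 : ℕ) : ZMod (n + 3)) = j := by
      have hc : ((m + 1 : ℕ) : ZMod (n + 3)) = j - i :=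
        (congrArg Nat.cast hm.symm).trans (ZMod.natCast_zmod_val _)
      rw [hc, add_sub_cancel]
    rw [hj] at hi
    linarith
  cases x
  cases l
  cases key
  rfl
end

section
/- Let G_1, G_2 be weighted graphs such that Γ_{kl}(G_1) ≥ Γ_{kl}(G_2) for all 1 ≤ k ≤ l ≤ N and R_p(G_1) = R_p(G_2) for all vertices p. Then in the ring P_n the difference I(G_2) − I(G_1) is a finite (possibly empty) sum of elements of the form I(H) with H a weighted graph; in particular I(G_1) ≤ I(G_2) in the sense that the difference is a nonnegative integer combination of monomials in the cluster variables and inverse edge variables. (Main technical theorem of Section 3.4.) -/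
/-!
Let `u = w₁ - w₂`. Number the gaps between consecutive vertices, gap `x` lying between `x` and
`x + 1`, and let `D x y` be the excess `Γ(G₁) - Γ(G₂)` of the arc of vertices between the gaps `x`
and `y`. Since `u` has zero row sums, an arc and its complement give the same value, so `D` is a
symmetric function on pairs of gaps of the cycle; it is nonnegative, vanishes on the diagonal, and
its mixed second difference at the vertices `x, y` is `-u x y` (`isExcess_of_Gamma`).

Suppose `D ≠ 0`. A nonnegative function on a quarter plane that is positive at the origin and
vanishes somewhere on both axes is positive on some rectangle based at the origin whose outer corner
has positive mixed difference: otherwise each column over the initial interval of positivity of the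
bottom row would stay at least as large as its bottom entry, and so never vanish (`exists_corner`).
Going forward from a point where `D > 0` and then backward from the far end of the rectangle obtained
yields a product of two arcs of gaps on which `D ≥ 1` and at both of whose extreme corners `u < 0`
(`IsExcess.exists_rect`). These corners are crossing diagonals `{p r}` and `{q s}`, and `u < 0 ≤ w₁`
there, so both occur in `G₂`. The Plücker relation reads `I(G₂) = I(G') + I(G'')`, where `G'` has the
pair replaced by `{p s}, {q r}` and `G''` by `{p q}, {r s}`. Passing from `G₂` to `G'` subtracts from
`D` exactly the indicator of that product of arcs (`IsExcess.move`), so `G₁` and `G'` still satisfy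
the hypotheses and induction on the sum of `D` applies. When `D = 0` the two graphs coincide.
-/

open Finset

/-- A weighted graph on the `(n+3)`-gon: a symmetric integer matrix with zero diagonal
whose entries at diagonals of the polygon are nonnegative. -/
def IsWG (n : ℕ) (w : ZMod (n + 3) → ZMod (n + 3) → ℤ) : Prop :=
  (∀ i j, w i j = w j i) ∧ (∀ i, w i i = 0) ∧ (∀ i j, IsDiag n i j → 0 ≤ w i j)

/-- `R_p(G) = Σ_j w_{pj}`, the sum of the weights of segments at the vertex `p`. -/
def Rsum (n : ℕ) (w : ZMod (n + 3) → ZMod (n + 3) → ℤ) (p : ZMod (n + 3)) : ℤ :=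
  ∑ j, w p j

/-- `Γ_{kl}(G) = (1/2)·Σ_{k≤i,j≤l} w_{ij} = Σ_{k≤i<j≤l} w_{ij}` (labels `1,…,N` cast
into `ZMod (n+3)`). -/
def Gamma (n : ℕ) (w : ZMod (n + 3) → ZMod (n + 3) → ℤ) (k l : ℕ) : ℤ :=
  ∑ i ∈ Finset.Icc k l, ∑ j ∈ Finset.Icc k l,
    if i < j then w (i : ZMod (n + 3)) (j : ZMod (n + 3)) else 0

/-- `I_{kl}(G) = Σ_{i∈I, j∈J} w_{ij}` where `I = {k+1,…,l}` and `J = {1,…,N} ∖ I`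
(labels cast into `ZMod (n+3)`). -/
def Iseg (n : ℕ) (w : ZMod (n + 3) → ZMod (n + 3) → ℤ) (k l : ℕ) : ℤ :=
  ∑ i ∈ Finset.Icc (k + 1) l, ∑ j ∈ Finset.Icc 1 (n + 3) \ Finset.Icc (k + 1) l,
    w (i : ZMod (n + 3)) (j : ZMod (n + 3))

instance (n : ℕ) (i j : ZMod (n + 3)) : Decidable (IsEdge n i j) := by
  unfold IsEdge; infer_instance

/-- Ordered pairs of distinct vertices of the `(n+3)`-gon: indices for the
variables `A_{ij}` attached to segments. -/
abbrev Seg (n : ℕ) := {p : ZMod (n + 3) × ZMod (n + 3) // p.1 ≠ p.2}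

abbrev SegPolyRing (n : ℕ) := MvPolynomial (Seg n) ℤ

/-- The ideal of `ℤ[A_{ij}]` generated by the symmetry relations `A_{ij} − A_{ji}`
and the Plücker relations `A_{ik}A_{jl} − A_{ij}A_{kl} − A_{il}A_{jk}` for quadruples
`i, j, k, l` in clockwise order. -/
noncomputable def pluIdeal (n : ℕ) : Ideal (SegPolyRing n) :=
  Ideal.span
    ({p | ∃ (i j : ZMod (n + 3)) (h : i ≠ j),
        p = MvPolynomial.X ⟨(i, j), h⟩ - MvPolynomial.X ⟨(j, i), h.symm⟩} ∪
     {p | ∃ (i j k l : ZMod (n + 3)) (hik : i ≠ k) (hjl : j ≠ l) (hij : i ≠ j)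
        (hkl : k ≠ l) (hil : i ≠ l) (hjk : j ≠ k), Clockwise n i j k l ∧
        p = MvPolynomial.X ⟨(i, k), hik⟩ * MvPolynomial.X ⟨(j, l), hjl⟩
          - MvPolynomial.X ⟨(i, j), hij⟩ * MvPolynomial.X ⟨(k, l), hkl⟩
          - MvPolynomial.X ⟨(i, l), hil⟩ * MvPolynomial.X ⟨(j, k), hjk⟩})

abbrev PlueckerRing (n : ℕ) := SegPolyRing n ⧸ pluIdeal n

/-- The cluster variable `A_{ij}` as an element of the quotient ring. -/
noncomputable def Avar (n : ℕ) (p : Seg n) : PlueckerRing n :=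
  Ideal.Quotient.mk (pluIdeal n) (MvPolynomial.X p)

/-- The multiplicative set generated by the edge variables. -/
noncomputable def edgeMonoid (n : ℕ) : Submonoid (PlueckerRing n) :=
  Submonoid.closure {r | ∃ p : Seg n, IsEdge n p.1.1 p.1.2 ∧ r = Avar n p}

/-- `P_n`: the ring `ℤ[A_{ij}]/(Plücker relations)` localized at the edge variables;
it models the coordinate ring of the cluster `A`-variety `Ã_{Aₙ}` with coefficients. -/
abbrev PRing (n : ℕ) := Localization (edgeMonoid n)

/-- The numerator `∏_{i<j} A_{ij}^{max(w_{ij},0)}` of `I(G)` (each unordered segment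
counted once, via `i.val < j.val`). -/
noncomputable def numerIG (n : ℕ) (w : ZMod (n + 3) → ZMod (n + 3) → ℤ) :
    PlueckerRing n :=
  ∏ p : Seg n,
    if p.1.1.val < p.1.2.val then Avar n p ^ (w p.1.1 p.1.2).toNat else 1

/-- The denominator `∏ A_{ij}^{max(−w_{ij},0)}` of `I(G)`, collecting the (edge)
variables with negative exponents; it lies in the multiplicative set of edge
variables. -/
noncomputable def denomIG (n : ℕ) (w : ZMod (n + 3) → ZMod (n + 3) → ℤ) :
    edgeMonoid n :=
  ∏ p : Seg n,
    if h : IsEdge n p.1.1 p.1.2 ∧ p.1.1.val < p.1.2.val then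
      (⟨Avar n p, Submonoid.subset_closure ⟨p, h.1, rfl⟩⟩ : edgeMonoid n)
        ^ (-(w p.1.1 p.1.2)).toNat
    else 1

/-- `I(G) = ∏_{i<j} A_{ij}^{w_{ij}} ∈ P_n` for a weighted graph `G` (negative
exponents occur only at the invertible edge variables). -/
noncomputable def IG (n : ℕ) (w : ZMod (n + 3) → ZMod (n + 3) → ℤ) : PRing n :=
  Localization.mk (numerIG n w) (denomIG n w)

/-! ### Monomials of weighted graphs and the Plücker relation -/

/-- The unit weight on the segment `{a b}`, as a symmetric matrix (for `a ≠ b`). -/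
def segWt (n : ℕ) (a b x y : ZMod (n + 3)) : ℤ :=
  (if x = a then 1 else 0) * (if y = b then 1 else 0) +
    (if x = b then 1 else 0) * (if y = a then 1 else 0)

lemma segWt_symm (n : ℕ) (a b x y : ZMod (n + 3)) : segWt n a b x y = segWt n a b y x := by
  unfold segWt; ring

lemma segWt_swap (n : ℕ) (a b x y : ZMod (n + 3)) : segWt n a b x y = segWt n b a x y := by
  unfold segWt; ring

lemma segWt_self (n : ℕ) {a b : ZMod (n + 3)} (h : a ≠ b) (x : ZMod (n + 3)) :
    segWt n a b x x = 0 := by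
  unfold segWt
  by_cases h1 : x = a
  · subst h1; simp [h]
  · simp [h1]

lemma segWt_nonneg (n : ℕ) (a b x y : ZMod (n + 3)) : 0 ≤ segWt n a b x y := by
  unfold segWt; split_ifs <;> simp

lemma IsWG.add_segWt {n : ℕ} {v : ZMod (n + 3) → ZMod (n + 3) → ℤ} (hv : IsWG n v)
    {a b : ZMod (n + 3)} (h : a ≠ b) : IsWG n (fun x y => v x y + segWt n a b x y) := by
  refine ⟨fun i j => ?_, fun i => ?_, fun i j hd => ?_⟩
  · change v i j + segWt n a b i j = v j i + segWt n a b j i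
    rw [hv.1 i j, segWt_symm]
  · simp [hv.2.1 i, segWt_self n h]
  · exact add_nonneg (hv.2.2 i j hd) (segWt_nonneg n a b i j)

lemma Avar_symm (n : ℕ) {a b : ZMod (n + 3)} (h : a ≠ b) :
    Avar n ⟨(a, b), h⟩ = Avar n ⟨(b, a), h.symm⟩ := by
  unfold Avar
  rw [Ideal.Quotient.mk_eq_mk_iff_sub_mem]
  exact Ideal.subset_span (Or.inl ⟨a, b, h, rfl⟩)

lemma Avar_pluecker (n : ℕ) {p q r s : ZMod (n + 3)} (hpr : p ≠ r) (hqs : q ≠ s) (hpq : p ≠ q)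
    (hrs : r ≠ s) (hps : p ≠ s) (hqr : q ≠ r) (h : Clockwise n p q r s) :
    Avar n ⟨(p, r), hpr⟩ * Avar n ⟨(q, s), hqs⟩ =
      Avar n ⟨(p, q), hpq⟩ * Avar n ⟨(r, s), hrs⟩ +
        Avar n ⟨(p, s), hps⟩ * Avar n ⟨(q, r), hqr⟩ := by
  unfold Avar
  rw [← map_mul, ← map_mul, ← map_mul, ← map_add, Ideal.Quotient.mk_eq_mk_iff_sub_mem]
  refine Ideal.subset_span (Or.inr ⟨p, q, r, s, hpr, hqs, hpq, hrs, hps, hqr, h, ?_⟩)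
  ring

lemma coe_denomIG (n : ℕ) (w : ZMod (n + 3) → ZMod (n + 3) → ℤ) :
    ((denomIG n w : edgeMonoid n) : PlueckerRing n) =
      ∏ p : Seg n, if IsEdge n p.1.1 p.1.2 ∧ p.1.1.val < p.1.2.val then
        Avar n p ^ (-(w p.1.1 p.1.2)).toNat else 1 := by
  unfold denomIG
  rw [Submonoid.coe_finsetProd]
  refine Finset.prod_congr rfl fun p _ => ?_
  split_ifs <;> simp

/-- The monomial `I(G)` is multiplied by `A_{ab}` when the weight of `{a b}` grows by one. -/
lemma IG_add_segWt (n : ℕ) {v : ZMod (n + 3) → ZMod (n + 3) → ℤ} (hv : IsWG n v)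
    {a b : ZMod (n + 3)} (h : a ≠ b) :
    IG n (fun x y => v x y + segWt n a b x y) =
      IG n v * algebraMap (PlueckerRing n) (PRing n) (Avar n ⟨(a, b), h⟩) := by
  wlog hlt : a.val < b.val generalizing a b
  · have hne : a.val ≠ b.val := fun h' => h (ZMod.val_injective _ h')
    have := this h.symm (by omega)
    rw [Avar_symm n h, ← this]
    congr 1
    funext x y
    rw [segWt_swap]
  have key : numerIG n (fun x y => v x y + segWt n a b x y) * (denomIG n v : PlueckerRing n) =
      numerIG n v * Avar n ⟨(a, b), h⟩ *
        (denomIG n (fun x y => v x y + segWt n a b x y) : PlueckerRing n) := by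
    have hA : Avar n ⟨(a, b), h⟩ =
        ∏ p : Seg n, if p = ⟨(a, b), h⟩ then Avar n p else 1 := by
      rw [Finset.prod_ite_eq']; simp
    rw [coe_denomIG, coe_denomIG, hA]
    unfold numerIG
    rw [← Finset.prod_mul_distrib, ← Finset.prod_mul_distrib, ← Finset.prod_mul_distrib]
    refine Finset.prod_congr rfl fun p _ => ?_
    obtain ⟨⟨x, y⟩, hxy⟩ := p
    dsimp only
    by_cases hval : x.val < y.val
    · by_cases hp : x = a ∧ y = b
      · obtain ⟨rfl, rfl⟩ := hp
        have e1 : segWt n x y x y = 1 := by simp [segWt, hxy]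
        simp only [e1, hval, if_true, and_true]
        by_cases he : IsEdge n x y
        · simp only [he, if_true]
          rw [← pow_add, ← pow_succ, ← pow_add]
          congr 1; omega
        · simp only [he, if_false, mul_one]
          rw [← pow_succ]
          have := hv.2.2 x y ⟨hxy, he⟩
          congr 1; omega
      · have hp' : ¬ (x = b ∧ y = a) := by
          rintro ⟨rfl, rfl⟩; omega
        have e1 : segWt n a b x y = 0 := by
          unfold segWt; split_ifs <;> simp_all
        have e2 : ¬ ((⟨(x, y), hxy⟩ : Seg n) = ⟨(a, b), h⟩) := by
          simpa using hp
        simp only [e1, e2, if_false, add_zero, mul_one]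
    · have e2 : ¬ ((⟨(x, y), hxy⟩ : Seg n) = ⟨(a, b), h⟩) := by
        intro h'
        simp only [Subtype.mk.injEq, Prod.mk.injEq] at h'
        obtain ⟨rfl, rfl⟩ := h'
        exact hval hlt
      simp [e2, hval]
  unfold IG
  rw [← Localization.mk_one_eq_algebraMap, Localization.mk_mul, mul_one,
    Localization.mk_eq_mk_iff, Localization.r_iff_exists]
  refine ⟨1, ?_⟩
  simp only [OneMemClass.coe_one, one_mul]
  rw [mul_comm, key, mul_comm]

/-- The Plücker relation, multiplied by the monomial of a weighted graph. -/
lemma IG_pluecker (n : ℕ) {v : ZMod (n + 3) → ZMod (n + 3) → ℤ} (hv : IsWG n v)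
    {p q r s : ZMod (n + 3)} (hpr : p ≠ r) (hqs : q ≠ s) (hpq : p ≠ q)
    (hrs : r ≠ s) (hps : p ≠ s) (hqr : q ≠ r) (h : Clockwise n p q r s) :
    IG n (fun x y => v x y + segWt n p r x y + segWt n q s x y) =
      IG n (fun x y => v x y + segWt n p q x y + segWt n r s x y) +
        IG n (fun x y => v x y + segWt n p s x y + segWt n q r x y) := by
  rw [IG_add_segWt n (hv.add_segWt hpr) hqs, IG_add_segWt n (hv.add_segWt hpq) hrs,
    IG_add_segWt n (hv.add_segWt hps) hqr, IG_add_segWt n hv hpr, IG_add_segWt n hv hpq,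
    IG_add_segWt n hv hps, mul_assoc, mul_assoc, mul_assoc, ← map_mul, ← map_mul, ← map_mul,
    ← mul_add, ← map_add, Avar_pluecker n hpr hqs hpq hrs hps hqr h]

/-! ### Corners of positive functions and excess functions -/

/-- A nonnegative function on the quarter plane that is positive at the origin and vanishes
somewhere on each axis has a rectangle of positivity, based at the origin, whose outer corner
carries a positive mixed difference. -/
lemma exists_corner (f : ℕ → ℕ → ℤ) (hf : ∀ x y, 0 ≤ f x y) (h0 : 0 < f 0 0)
    (hA : ∃ a, f a 0 = 0) (hB : ∃ b, f 0 b = 0) :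
    ∃ X Y : ℕ, (∀ x ≤ X, ∀ y ≤ Y, 0 < f x y) ∧
      f X (Y + 1) + f (X + 1) Y < f X Y + f (X + 1) (Y + 1) := by
  classical
  by_contra! hcon
  obtain ⟨b, hb⟩ := hB
  have hA0 : Nat.find hA ≠ 0 := by
    intro h; have := Nat.find_spec hA; rw [h] at this; omega
  obtain ⟨m, hm⟩ := Nat.exists_eq_succ_of_ne_zero hA0
  have hm0 : f (m + 1) 0 = 0 := by
    have := Nat.find_spec hA; rwa [hm] at this
  have hpos : ∀ x ≤ m, 0 < f x 0 := fun x hx =>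
    lt_of_le_of_ne (hf x 0) (Ne.symm (Nat.find_min hA (by omega)))
  -- Without such a corner every column over `[0, m]` dominates its bottom entry.
  have main : ∀ y, (∀ x ≤ m, ∀ y' ≤ y, f x 0 ≤ f x y') ∧
      (∀ x ≤ m, f (x + 1) y - f (x + 1) 0 ≤ f x y - f x 0) := by
    intro y
    induction y with
    | zero =>
      refine ⟨fun x _ y' hy' => ?_, fun x _ => by simp⟩
      rw [Nat.le_zero.mp hy']
    | succ y ih =>
      have step : ∀ x ≤ m, f (x + 1) (y + 1) - f (x + 1) 0 ≤ f x (y + 1) - f x 0 := by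
        intro x hx
        have h1 := hcon x y fun x' hx' y' hy' =>
          lt_of_lt_of_le (hpos x' (by omega)) (ih.1 x' (by omega) y' hy')
        have h2 := ih.2 x hx
        linarith
      refine ⟨fun x hx y' hy' => ?_, step⟩
      rcases Nat.lt_or_ge y' (y + 1) with hlt | hge
      · exact ih.1 x hx y' (by omega)
      have hy : y' = y + 1 := by omega
      subst hy
      have down : ∀ k ≤ m, 0 ≤ f (m - k) (y + 1) - f (m - k) 0 := by
        intro k
        induction k with
        | zero =>
          intro _
          have h1 := step m le_rfl
          have h2 := hf (m + 1) (y + 1)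
          simp only [Nat.sub_zero]
          linarith
        | succ k ihk =>
          intro hk
          have h1 := step (m - (k + 1)) (by omega)
          have h2 := ihk (by omega)
          rw [show m - (k + 1) + 1 = m - k by omega] at h1
          linarith
      have := down (m - x) (by omega)
      rw [show m - (m - x) = x by omega] at this
      linarith
  have := (main b).1 0 (Nat.zero_le _) b le_rfl
  omega

/-- The mixed second difference of a function of two gaps, located at a pair of vertices; gap `x`
lies between the vertices `x` and `x + 1`. -/
def mixedDiff (n : ℕ) (D : ZMod (n + 3) → ZMod (n + 3) → ℤ) (x y : ZMod (n + 3)) : ℤ :=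
  D x y + D (x - 1) (y - 1) - D (x - 1) y - D x (y - 1)

/-- The data of a comparison `G₁ ≤ G₂`, with `u = w₁ - w₂`: a nonnegative symmetric function `D` of
two gaps, namely the excess of the weight of `G₁` over that of `G₂` inside the arc of vertices
between the two gaps, whose mixed difference recovers `-u`. -/
structure IsExcess (n : ℕ) (u D : ZMod (n + 3) → ZMod (n + 3) → ℤ) : Prop where
  symm : ∀ x y, D x y = D y x
  nonneg : ∀ x y, 0 ≤ D x y
  diag : ∀ x, D x x = 0
  diff : ∀ x y, u x y = -mixedDiff n D x y

lemma IsExcess.adj {n : ℕ} {u D : ZMod (n + 3) → ZMod (n + 3) → ℤ} (h : IsExcess n u D)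
    (hu : ∀ x, u x x = 0) (x : ZMod (n + 3)) : D x (x + 1) = 0 := by
  have h1 := h.diff (x + 1) (x + 1)
  rw [hu, mixedDiff, add_sub_cancel_right, h.diag, h.diag, h.symm (x + 1) x] at h1
  linarith

lemma natCast_self_zmod (n : ℕ) : ((n + 3 : ℕ) : ZMod (n + 3)) = 0 := ZMod.natCast_self _

/-- A nonzero excess function is positive on a product of two arcs of gaps, at both of whose extreme
corners `u` is negative. -/
lemma IsExcess.exists_rect {n : ℕ} {u D : ZMod (n + 3) → ZMod (n + 3) → ℤ} (h : IsExcess n u D)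
    (hu : ∀ x, u x x = 0) {x₀ y₀ : ZMod (n + 3)} (h0 : D x₀ y₀ ≠ 0) :
    ∃ (p : ZMod (n + 3)) (a b c : ℕ), 0 < a ∧ a < b ∧ b < c ∧ c < n + 3 ∧
      (∀ x < a, ∀ y < c - b, 0 < D (p + (x : ℕ)) (p + (b : ℕ) + (y : ℕ))) ∧
      u p (p + (b : ℕ)) < 0 ∧ u (p + (a : ℕ)) (p + (c : ℕ)) < 0 := by
  have hpos : 0 < D x₀ y₀ := lt_of_le_of_ne (h.nonneg _ _) (Ne.symm h0)
  obtain ⟨X₀, Y₀, hr₀, hc₀⟩ := exists_corner (fun x y => D (x₀ + (x : ℕ)) (y₀ + (y : ℕ)))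
    (fun _ _ => h.nonneg _ _) (by simpa using hpos)
    ⟨(y₀ - x₀).val, by simp [h.diag]⟩ ⟨(x₀ - y₀).val, by simp [h.diag]⟩
  -- The second rectangle grows backwards from the far corner of the first one.
  set x₁ : ZMod (n + 3) := x₀ + (X₀ : ℕ) with hx₁
  set y₁ : ZMod (n + 3) := y₀ + (Y₀ : ℕ) with hy₁
  obtain ⟨X, Y, hr, hc⟩ := exists_corner (fun x y => D (x₁ - (x : ℕ)) (y₁ - (y : ℕ)))
    (fun _ _ => h.nonneg _ _) (by simpa using hr₀ X₀ le_rfl Y₀ le_rfl)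
    ⟨(x₁ - y₁).val, by simp [h.diag]⟩ ⟨(y₁ - x₁).val, by simp [h.diag]⟩
  set p : ZMod (n + 3) := x₁ - (X : ℕ) with hp
  set r : ZMod (n + 3) := y₁ - (Y : ℕ) with hrr
  have hrect : ∀ x ≤ X, ∀ y ≤ Y, 0 < D (p + (x : ℕ)) (r + (y : ℕ)) := by
    intro x hx y hy
    have := hr (X - x) (by omega) (Y - y) (by omega)
    rw [Nat.cast_sub hx, Nat.cast_sub hy] at this
    convert this using 2 <;> simp only [hp, hrr] <;> ring
  obtain ⟨b, hbN, hb⟩ : ∃ b : ℕ, b < n + 3 ∧ r = p + (b : ℕ) :=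
    ⟨(r - p).val, ZMod.val_lt _, by simp⟩
  have hb0 : b ≠ 0 := by
    rintro rfl
    have := hrect 0 (Nat.zero_le _) 0 (Nat.zero_le _)
    simp [hb, h.diag] at this
  -- Positivity keeps the two arcs disjoint and non-adjacent.
  have hXb : X + 1 < b := by
    by_contra hcon
    have := hrect (b - 1) (by omega) 0 (Nat.zero_le _)
    rw [hb, Nat.cast_sub (by omega)] at this
    have h2 := h.adj hu (p + ((b : ℕ) - (1 : ℕ)))
    rw [show p + (((b : ℕ) : ZMod (n + 3)) - ((1 : ℕ) : ZMod (n + 3))) + 1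
      = p + (b : ℕ) + ((0 : ℕ) : ZMod (n + 3)) by push_cast; ring] at h2
    omega
  have hYN : b + Y + 1 < n + 3 := by
    by_contra hcon
    have := hrect 0 (Nat.zero_le _) (n + 2 - b) (by omega)
    rw [hb, h.symm] at this
    have h2 := h.adj hu (p + (b : ℕ) + ((n + 2 - b : ℕ) : ZMod (n + 3)))
    rw [show p + (b : ℕ) + ((n + 2 - b : ℕ) : ZMod (n + 3)) + 1 = p + ((0 : ℕ) : ZMod (n + 3)) by
      have e := natCast_self_zmod n
      rw [Nat.cast_sub (by omega)]
      push_cast at e ⊢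
      linear_combination e] at h2
    omega
  refine ⟨p, X + 1, b, b + Y + 1, by omega, hXb, by omega, hYN, ?_, ?_, ?_⟩
  · intro x hx y hy
    rw [← hb]
    exact hrect x (by omega) y (by omega)
  · rw [← hb, h.diff, mixedDiff]
    have e1 : x₁ - ((X + 1 : ℕ) : ZMod (n + 3)) = p - 1 := by rw [hp]; push_cast; ring
    have e2 : y₁ - ((Y + 1 : ℕ) : ZMod (n + 3)) = r - 1 := by rw [hrr]; push_cast; ring
    rw [e1, e2] at hc
    linarith
  · have e1 : p + ((X + 1 : ℕ) : ZMod (n + 3)) = x₁ + 1 := by rw [hp]; push_cast; ring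
    have e2 : p + ((b + Y + 1 : ℕ) : ZMod (n + 3)) = y₁ + 1 := by
      have : r + (Y : ℕ) = y₁ := by rw [hrr]; ring
      rw [← this, hb]; push_cast; ring
    have e3 : x₀ + ((X₀ + 1 : ℕ) : ZMod (n + 3)) = x₁ + 1 := by rw [hx₁]; push_cast; ring
    have e4 : y₀ + ((Y₀ + 1 : ℕ) : ZMod (n + 3)) = y₁ + 1 := by rw [hy₁]; push_cast; ring
    rw [e3, e4] at hc₀
    rw [e1, e2, h.diff, mixedDiff, add_sub_cancel_right, add_sub_cancel_right]
    linarith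

/-! ### The effect of a Plücker move on the excess -/

/-- The indicator function of the arc `p, p + 1, …, p + m - 1`. -/
def arcInd (n : ℕ) (p : ZMod (n + 3)) (m : ℕ) (x : ZMod (n + 3)) : ℤ :=
  if (x - p).val < m then 1 else 0

lemma val_sub_one (n : ℕ) (z : ZMod (n + 3)) :
    (z = 0 ∧ (z - 1).val = n + 2) ∨ (z ≠ 0 ∧ z.val = (z - 1).val + 1) := by
  have e := natCast_self_zmod n
  push_cast at e
  by_cases hz : z = 0
  · left
    refine ⟨hz, ?_⟩
    have : z - 1 = ((n + 2 : ℕ) : ZMod (n + 3)) := by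
      rw [hz]; push_cast; linear_combination -e
    rw [this, ZMod.val_natCast_of_lt (by omega)]
  · right
    refine ⟨hz, ?_⟩
    have h0 : z.val ≠ 0 := by simpa using hz
    have : z - 1 = ((z.val - 1 : ℕ) : ZMod (n + 3)) := by
      rw [Nat.cast_sub (by omega)]; simp
    have hlt := ZMod.val_lt z
    rw [this, ZMod.val_natCast_of_lt (by omega)]
    omega

lemma arcInd_sub (n : ℕ) (p : ZMod (n + 3)) {m : ℕ} (h0 : 0 < m) (hm : m < n + 3)
    (x : ZMod (n + 3)) :
    arcInd n p m x - arcInd n p m (x - 1) =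
      (if x = p then 1 else 0) - (if x = p + (m : ℕ) then 1 else 0) := by
  obtain ⟨z, rfl⟩ : ∃ z, x = p + z := ⟨x - p, by ring⟩
  have e1 : p + z - p = z := by ring
  have e2 : p + z - 1 - p = z - 1 := by ring
  have e3 : (p + z = p) ↔ z = 0 := by simp
  have e4 : (p + z = p + (m : ℕ)) ↔ z.val = m := by
    rw [add_right_inj]
    constructor
    · rintro rfl; exact ZMod.val_natCast_of_lt hm
    · rintro rfl; simp
  unfold arcInd
  simp only [e1, e2, e3, e4]
  rcases val_sub_one n z with ⟨rfl, h2⟩ | ⟨h1, h2⟩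
  · simp only [h2, ZMod.val_zero]
    split_ifs <;> omega
  · simp only [h1, if_false]
    split_ifs <;> omega

/-- The weighted graphs and excess functions are compatible with a Plücker move: replacing
`{p r}, {q s}` by `{p s}, {q r}` lowers the excess by the indicator of a product of two arcs. -/
lemma IsExcess.move {n : ℕ} {u D : ZMod (n + 3) → ZMod (n + 3) → ℤ} (h : IsExcess n u D)
    {p : ZMod (n + 3)} {a b c : ℕ} (ha : 0 < a) (hab : a < b) (hbc : b < c) (hc : c < n + 3)
    (hpos : ∀ x < a, ∀ y < c - b, 0 < D (p + (x : ℕ)) (p + (b : ℕ) + (y : ℕ))) :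
    ∃ D', IsExcess n (fun x y => u x y + segWt n p (p + (b : ℕ)) x y
        + segWt n (p + (a : ℕ)) (p + (c : ℕ)) x y - segWt n p (p + (c : ℕ)) x y
        - segWt n (p + (a : ℕ)) (p + (b : ℕ)) x y) D' ∧
      ∑ x, ∑ y, D' x y < ∑ x, ∑ y, D x y := by
  set A := arcInd n p a with hA
  set B := arcInd n (p + (b : ℕ)) (c - b) with hB
  have hrect : ∀ x y, (x - p).val < a → (y - (p + (b : ℕ))).val < c - b → 0 < D x y := by
    intro x y hx hy
    simpa using hpos _ hx _ hy
  have hdisj : ∀ x, A x * B x = 0 := by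
    intro x
    simp only [hA, hB, arcInd]
    split_ifs with h1 h2 <;> simp
    have := hrect x x h1 h2
    rw [h.diag] at this
    exact absurd this (lt_irrefl _)
  have hle : ∀ x y, A x * B y ≤ D x y ∧ 0 ≤ A x * B y := by
    intro x y
    have := h.nonneg x y
    simp only [hA, hB, arcInd]
    split_ifs with h1 h2 <;> simp [this]
    have := hrect x y h1 h2
    omega
  have hAB : ∀ x y, A x * B y * (B x * A y) = 0 := by
    intro x y
    rw [show A x * B y * (B x * A y) = (A x * B x) * (B y * A y) by ring, hdisj, zero_mul]
  have hnn : ∀ x y, 0 ≤ D x y - A x * B y - B x * A y := by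
    intro x y
    have h1 := hle x y
    have h2 := hle y x
    rw [h.symm y x, mul_comm] at h2
    rcases mul_eq_zero.mp (hAB x y) with h3 | h3 <;> rw [h3] <;> linarith
  refine ⟨fun x y => D x y - A x * B y - B x * A y, ⟨?_, hnn, ?_, ?_⟩, ?_⟩
  · intro x y
    rw [h.symm x y]; ring
  · intro x
    rw [h.diag, mul_comm (B x), hdisj]; ring
  · intro x y
    have hq : p + (b : ℕ) + ((c - b : ℕ) : ZMod (n + 3)) = p + (c : ℕ) := by
      rw [Nat.cast_sub hbc.le]; ring
    have a1 := arcInd_sub n p ha (by omega) x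
    have a2 := arcInd_sub n p ha (by omega) y
    have b1 := arcInd_sub n (p + (b : ℕ)) (m := c - b) (by omega) (by omega) x
    have b2 := arcInd_sub n (p + (b : ℕ)) (m := c - b) (by omega) (by omega) y
    rw [hq] at b1 b2
    rw [← hA] at a1 a2
    rw [← hB] at b1 b2
    have e1 : (A x - A (x - 1)) * (B y - B (y - 1)) + (B x - B (x - 1)) * (A y - A (y - 1)) =
      segWt n p (p + (b : ℕ)) x y
        + segWt n (p + (a : ℕ)) (p + (c : ℕ)) x y - segWt n p (p + (c : ℕ)) x y
        - segWt n (p + (a : ℕ)) (p + (b : ℕ)) x y := by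
      rw [a1, a2, b1, b2]
      unfold segWt
      ring
    rw [h.diff x y]
    unfold mixedDiff
    linear_combination -e1
  · have hlow : ∀ x y, D x y - A x * B y - B x * A y ≤ D x y := by
      intro x y
      have h1 := (hle x y).2
      have h2 := (hle y x).2
      rw [mul_comm] at h2
      linarith
    refine Finset.sum_lt_sum (fun x _ => Finset.sum_le_sum fun y _ => hlow x y)
      ⟨p, Finset.mem_univ _, Finset.sum_lt_sum (fun y _ => hlow p y)
        ⟨p + (b : ℕ), Finset.mem_univ _, ?_⟩⟩
    have hAp : A p = 1 := by simp [hA, arcInd, ha]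
    have hBp : B (p + (b : ℕ)) = 1 := by simp [hB, arcInd, hbc]
    have h2 := (hle (p + (b : ℕ)) p).2
    rw [mul_comm] at h2
    change D p _ - A p * B _ - B p * A _ < D p _
    rw [hAp, hBp]
    linarith

lemma isDiag_add {n : ℕ} (p : ZMod (n + 3)) {a b : ℕ} (h1 : a + 2 ≤ b) (h2 : b < a + n + 2) :
    IsDiag n (p + (a : ℕ)) (p + (b : ℕ)) := by
  obtain ⟨k, rfl⟩ := Nat.exists_eq_add_of_le h1
  have key : ∀ m : ℕ, 0 < m → m < n + 3 → ((m : ℕ) : ZMod (n + 3)) ≠ 0 := by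
    intro m hm hm' h0
    have := ZMod.val_natCast_of_lt hm'
    rw [h0, ZMod.val_zero] at this
    omega
  refine ⟨fun h => key (k + 2) (by omega) (by omega) ?_, ?_⟩
  · push_cast at h ⊢
    linear_combination -h
  · rintro (h | h)
    · apply key (k + 3) (by omega) (by omega)
      push_cast at h ⊢
      linear_combination -h
    · apply key (k + 1) (by omega) (by omega)
      push_cast at h ⊢
      linear_combination h

/-- The theorem in terms of excess functions, by induction on the total excess. -/
lemma IsExcess.exists_sum {n : ℕ} {w₁ : ZMod (n + 3) → ZMod (n + 3) → ℤ} (h₁ : IsWG n w₁)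
    (m : ℕ) : ∀ (w₂ D : ZMod (n + 3) → ZMod (n + 3) → ℤ), IsWG n w₂ →
      IsExcess n (fun x y => w₁ x y - w₂ x y) D → ∑ x, ∑ y, D x y ≤ m →
      ∃ (r : ℕ) (H : Fin r → (ZMod (n + 3) → ZMod (n + 3) → ℤ)),
        (∀ i, IsWG n (H i)) ∧ IG n w₂ - IG n w₁ = ∑ i, IG n (H i) := by
  induction m using Nat.strong_induction_on with
  | _ m ih =>
  intro w₂ D h₂ hD hm
  by_cases hz : ∀ x y, D x y = 0
  · have hw : w₂ = w₁ := by
      funext x y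
      have := hD.diff x y
      simp only [mixedDiff, hz] at this
      linarith
    exact ⟨0, Fin.elim0, fun i => i.elim0, by simp [hw]⟩
  push Not at hz
  obtain ⟨x₀, y₀, h0⟩ := hz
  obtain ⟨p, a, b, c, ha, hab, hbc, hc, hpos, hn1, hn2⟩ :=
    hD.exists_rect (fun x => by simp [h₁.2.1, h₂.2.1]) h0
  obtain ⟨D', hD', hlt⟩ := hD.move ha hab hbc hc hpos
  have val_eq : ∀ t : ℕ, t < n + 3 → (p + ((t : ℕ) : ZMod (n + 3)) - p).val = t := by
    intro t ht
    rw [add_sub_cancel_left, ZMod.val_natCast_of_lt ht]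
  have d1 : IsDiag n p (p + (b : ℕ)) := by
    have := isDiag_add p (a := 0) (b := b) (by omega) (by omega)
    simpa using this
  have d2 : IsDiag n (p + (a : ℕ)) (p + (c : ℕ)) := isDiag_add p (by omega) (by omega)
  have ne : ∀ s t : ℕ, s < t → t < n + 3 →
      p + ((s : ℕ) : ZMod (n + 3)) ≠ p + ((t : ℕ) : ZMod (n + 3)) := by
    intro s t hst ht h
    have e1 := val_eq s (by omega)
    rw [h, val_eq t ht] at e1
    omega
  have ne0 : ∀ t : ℕ, 0 < t → t < n + 3 → p ≠ p + ((t : ℕ) : ZMod (n + 3)) := by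
    intro t h1 h2
    simpa using ne 0 t h1 h2
  have hcw : Clockwise n p (p + (a : ℕ)) (p + (b : ℕ)) (p + (c : ℕ)) := by
    unfold Clockwise
    rw [val_eq a (by omega), val_eq b (by omega), val_eq c hc]
    exact ⟨ha, hab, hbc⟩
  set q := p + ((a : ℕ) : ZMod (n + 3)) with hq
  set r := p + ((b : ℕ) : ZMod (n + 3)) with hr
  set s := p + ((c : ℕ) : ZMod (n + 3)) with hs
  have hpq : p ≠ q := ne0 a ha (by omega)
  have hpr : p ≠ r := ne0 b (by omega) (by omega)
  have hps : p ≠ s := ne0 c (by omega) hc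
  have hqr : q ≠ r := ne a b hab (by omega)
  have hqs : q ≠ s := ne a c (by omega) hc
  have hrs : r ≠ s := ne b c hbc hc
  have hw1 : 1 ≤ w₂ p r := by have := h₁.2.2 _ _ d1; omega
  have hw2 : 1 ≤ w₂ q s := by have := h₁.2.2 _ _ d2; omega
  -- What is left of `w₂` once the crossing pair `{p r}`, `{q s}` is removed.
  set v : ZMod (n + 3) → ZMod (n + 3) → ℤ :=
    fun x y => w₂ x y - segWt n p r x y - segWt n q s x y with hv
  have hvWG : IsWG n v := by
    refine ⟨fun x y => ?_, fun x => ?_, fun x y hd => ?_⟩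
    · simp only [hv]
      rw [h₂.1 x y, segWt_symm n p r, segWt_symm n q s]
    · simp only [hv]
      rw [h₂.2.1, segWt_self n hpr, segWt_self n hqs]; simp
    · have hxy := h₂.2.2 x y hd
      have hw1' : 1 ≤ w₂ r p := by rw [h₂.1]; exact hw1
      have hw2' : 1 ≤ w₂ s q := by rw [h₂.1]; exact hw2
      simp only [hv, segWt]
      by_cases c1 : x = p ∧ y = r
      · obtain ⟨rfl, rfl⟩ := c1
        simp [hpr, hpq, hps]; omega
      by_cases c2 : x = r ∧ y = p
      · obtain ⟨rfl, rfl⟩ := c2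
        simp [hpr, hpr.symm, hqr.symm, hrs]; omega
      by_cases c3 : x = q ∧ y = s
      · obtain ⟨rfl, rfl⟩ := c3
        simp [hpq.symm, hqr, hqs]; omega
      by_cases c4 : x = s ∧ y = q
      · obtain ⟨rfl, rfl⟩ := c4
        simp [hps.symm, hrs.symm, hqs.symm]; omega
      have z : ∀ i j : ZMod (n + 3), ¬ (x = i ∧ y = j) →
          (if x = i then (1 : ℤ) else 0) * (if y = j then 1 else 0) = 0 := by
        intro i j hij
        split_ifs <;> simp_all
      rw [z _ _ c1, z _ _ c2, z _ _ c3, z _ _ c4]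
      linarith
  have hw₂ : w₂ = fun x y => v x y + segWt n p r x y + segWt n q s x y := by
    funext x y; simp only [hv]; ring
  have hplu := IG_pluecker n hvWG hpr hqs hpq hrs hps hqr hcw
  rw [← hw₂] at hplu
  have hnn' : 0 ≤ ∑ x, ∑ y, D' x y :=
    Finset.sum_nonneg fun x _ => Finset.sum_nonneg fun y _ => hD'.nonneg x y
  obtain ⟨k, H, hH, hsum⟩ := ih (∑ x, ∑ y, D' x y).toNat (by omega)
    (fun x y => v x y + segWt n p s x y + segWt n q r x y) D'
    ((hvWG.add_segWt hps).add_segWt hqr)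
    (by
      convert hD' using 3
      simp only [hv]; ring) (by omega)
  refine ⟨k + 1, Fin.cons (fun x y => v x y + segWt n p q x y + segWt n r s x y) H, ?_, ?_⟩
  · intro i
    refine Fin.cases ?_ (fun i => ?_) i
    · exact (hvWG.add_segWt hpq).add_segWt hrs
    · exact hH i
  · rw [Fin.sum_univ_succ]
    simp only [Fin.cons_zero, Fin.cons_succ]
    rw [← hsum, hplu]
    abel

/-! ### The excess function attached to `Γ` -/

/-- Partial sums of a function on the vertices, taken over the vertices `1, …, x`. -/
def partialSum (n : ℕ) (h : ZMod (n + 3) → ℤ) (x : ZMod (n + 3)) : ℤ :=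
  ∑ i ∈ Finset.Icc 1 x.val, h (i : ZMod (n + 3))

lemma sum_Icc_eq (n : ℕ) (h : ZMod (n + 3) → ℤ) :
    ∑ i ∈ Finset.Icc 1 (n + 2), h (i : ZMod (n + 3)) = (∑ x, h x) - h 0 := by
  have e : ∑ x, h x = ∑ i ∈ Finset.range (n + 3), h (i : ZMod (n + 3)) := by
    refine Finset.sum_bij' (fun x _ => x.val) (fun i _ => (i : ZMod (n + 3))) ?_ ?_ ?_ ?_ ?_
    · intro x _; exact Finset.mem_range.mpr (ZMod.val_lt x)
    · intros; exact Finset.mem_univ _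
    · intro x _; simp
    · intro i hi; exact ZMod.val_natCast_of_lt (Finset.mem_range.mp hi)
    · intro x _; simp
  rw [e, Finset.range_eq_Ico, Finset.sum_eq_sum_Ico_succ_bot (by omega)]
  have : Finset.Ico (0 + 1) (n + 3) = Finset.Icc 1 (n + 2) := by
    ext; simp only [Finset.mem_Ico, Finset.mem_Icc]; omega
  rw [this]
  simp

/-- Partial sums of a function of total zero are well defined around the cycle. -/
lemma partialSum_sub (n : ℕ) (h : ZMod (n + 3) → ℤ) (hs : ∑ x, h x = 0) (x : ZMod (n + 3)) :
    partialSum n h x - partialSum n h (x - 1) = h x := by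
  unfold partialSum
  rcases val_sub_one n x with ⟨rfl, h2⟩ | ⟨_, h2⟩
  · rw [h2, sum_Icc_eq, hs]; simp
  · have e : ((x - 1).val + 1 : ℕ) = x.val := h2.symm
    have : (((x - 1).val + 1 : ℕ) : ZMod (n + 3)) = x := by rw [e]; simp
    rw [h2, Finset.sum_Icc_succ_top (by omega), this]
    ring

lemma Gamma_succ (n : ℕ) (u : ZMod (n + 3) → ZMod (n + 3) → ℤ) {k b : ℕ} (hk : k ≤ b + 1) :
    Gamma n u k (b + 1) = Gamma n u k b +
      ∑ i ∈ Finset.Icc k b, u (i : ZMod (n + 3)) ((b + 1 : ℕ) : ZMod (n + 3)) := by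
  unfold Gamma
  rw [Finset.sum_Icc_succ_top hk]
  have e0 : (∑ j ∈ Finset.Icc k (b + 1), if b + 1 < j then
      u ((b + 1 : ℕ) : ZMod (n + 3)) (j : ZMod (n + 3)) else 0) = 0 := by
    refine Finset.sum_eq_zero fun j hj => ?_
    rw [if_neg]
    have := (Finset.mem_Icc.mp hj).2
    omega
  rw [e0, add_zero, ← Finset.sum_add_distrib]
  refine Finset.sum_congr rfl fun i hi => ?_
  rw [Finset.sum_Icc_succ_top hk, if_pos]
  have := (Finset.mem_Icc.mp hi).2
  omega

lemma Gamma_empty (n : ℕ) (u : ZMod (n + 3) → ZMod (n + 3) → ℤ) (a : ℕ) :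
    Gamma n u (a + 1) a = 0 := by
  simp [Gamma]

lemma Gamma_double (n : ℕ) (u : ZMod (n + 3) → ZMod (n + 3) → ℤ) (hu : ∀ x y, u x y = u y x)
    (hd : ∀ x, u x x = 0) (a : ℕ) :
    Gamma n u 1 a + Gamma n u 1 a = ∑ i ∈ Finset.Icc 1 a, ∑ j ∈ Finset.Icc 1 a,
      u (i : ZMod (n + 3)) (j : ZMod (n + 3)) := by
  induction a with
  | zero => simp [Gamma]
  | succ a ih =>
    rw [Gamma_succ n u (by omega), Finset.sum_Icc_succ_top (by omega)]
    simp_rw [Finset.sum_Icc_succ_top (show 1 ≤ a + 1 by omega)]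
    have e : ∑ j ∈ Finset.Icc 1 a, u ((a + 1 : ℕ) : ZMod (n + 3)) (j : ZMod (n + 3)) =
        ∑ j ∈ Finset.Icc 1 a, u (j : ZMod (n + 3)) ((a + 1 : ℕ) : ZMod (n + 3)) :=
      Finset.sum_congr rfl fun j _ => hu _ _
    rw [Finset.sum_add_distrib, hd, ← ih, e]
    ring

lemma Gamma_inclusion_exclusion (n : ℕ) (u : ZMod (n + 3) → ZMod (n + 3) → ℤ)
    (hu : ∀ x y, u x y = u y x) (hd : ∀ x, u x x = 0) {a b : ℕ} (hab : a ≤ b) :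
    Gamma n u 1 a + Gamma n u 1 b - ∑ i ∈ Finset.Icc 1 a, ∑ j ∈ Finset.Icc 1 b,
      u (i : ZMod (n + 3)) (j : ZMod (n + 3)) = Gamma n u (a + 1) b := by
  induction b, hab using Nat.le_induction with
  | base => rw [Gamma_double n u hu hd, Gamma_empty, sub_self]
  | succ b hab ih =>
    rw [Gamma_succ n u (by omega), Gamma_succ n u (by omega : a + 1 ≤ b + 1), ← ih]
    simp_rw [Finset.sum_Icc_succ_top (show 1 ≤ b + 1 by omega)]
    rw [Finset.sum_add_distrib]
    have e : ∑ i ∈ Finset.Icc 1 b, u (i : ZMod (n + 3)) ((b + 1 : ℕ) : ZMod (n + 3)) =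
        ∑ i ∈ Finset.Icc 1 a, u (i : ZMod (n + 3)) ((b + 1 : ℕ) : ZMod (n + 3)) +
        ∑ i ∈ Finset.Icc (a + 1) b, u (i : ZMod (n + 3)) ((b + 1 : ℕ) : ZMod (n + 3)) := by
      have hI : ∀ m : ℕ, Finset.Icc 1 m = Finset.Ico 1 (m + 1) := by
        intro m; ext; simp only [Finset.mem_Ico, Finset.mem_Icc]; omega
      have hI' : Finset.Icc (a + 1) b = Finset.Ico (a + 1) (b + 1) := by
        ext; simp only [Finset.mem_Ico, Finset.mem_Icc]; omega
      rw [hI, hI, hI', Finset.sum_Ico_consecutive _ (by omega) (by omega)]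
    rw [e]
    ring

lemma Gamma_sub (n : ℕ) (w₁ w₂ : ZMod (n + 3) → ZMod (n + 3) → ℤ) (k l : ℕ) :
    Gamma n (fun x y => w₁ x y - w₂ x y) k l = Gamma n w₁ k l - Gamma n w₂ k l := by
  unfold Gamma
  rw [← Finset.sum_sub_distrib]
  refine Finset.sum_congr rfl fun i _ => ?_
  rw [← Finset.sum_sub_distrib]
  refine Finset.sum_congr rfl fun j _ => ?_
  split_ifs <;> simp

/-- The function `Γ_{x+1,y}` of two gaps, written symmetrically by inclusion-exclusion; vanishing
row sums make it an excess function on the whole cycle. -/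
lemma isExcess_of_Gamma (n : ℕ) (u : ZMod (n + 3) → ZMod (n + 3) → ℤ)
    (hu : ∀ x y, u x y = u y x) (hd : ∀ x, u x x = 0) (hR : ∀ x, ∑ y, u x y = 0)
    (hG : ∀ k l : ℕ, 1 ≤ k → k ≤ l → l ≤ n + 3 → 0 ≤ Gamma n u k l) :
    IsExcess n u (fun x y => Gamma n u 1 x.val + Gamma n u 1 y.val -
      partialSum n (fun i => partialSum n (u i) y) x) := by
  have hsymm : ∀ x y : ZMod (n + 3), partialSum n (fun i => partialSum n (u i) y) x =
      partialSum n (fun i => partialSum n (u i) x) y := by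
    intro x y
    unfold partialSum
    rw [Finset.sum_comm]
    exact Finset.sum_congr rfl fun i _ => Finset.sum_congr rfl fun j _ => hu _ _
  refine ⟨fun x y => ?_, fun x y => ?_, fun x => ?_, fun x y => ?_⟩
  · rw [hsymm]; ring
  · wlog hxy : x.val ≤ y.val generalizing x y
    · have := this y x (by omega)
      rw [hsymm] at this
      linarith
    unfold partialSum
    rw [Gamma_inclusion_exclusion n u hu hd hxy]
    rcases hxy.eq_or_lt with h | h
    · rw [h, Gamma_empty]
    · exact hG _ _ (by omega) h (ZMod.val_lt y).le
  · unfold partialSum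
    rw [Gamma_inclusion_exclusion n u hu hd le_rfl, Gamma_empty]
  · have hsum : ∀ y, ∑ i, partialSum n (u i) y = 0 := by
      intro y
      unfold partialSum
      rw [Finset.sum_comm]
      refine Finset.sum_eq_zero fun j _ => ?_
      rw [Finset.sum_congr rfl fun i _ => hu i _]
      exact hR _
    have e1 := partialSum_sub n (fun i => partialSum n (u i) y) (hsum y) x
    have e2 := partialSum_sub n (fun i => partialSum n (u i) (y - 1)) (hsum (y - 1)) x
    have e3 := partialSum_sub n (u x) (hR x) y
    simp only [mixedDiff]
    linarith

set_option synthInstance.maxHeartbeats 1000000 in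
/-- Main technical theorem: if `Γ_{kl}(G₁) ≥ Γ_{kl}(G₂)` for all `1 ≤ k ≤ l ≤ N` and
`R_p(G₁) = R_p(G₂)` for all vertices `p`, then `I(G₂) − I(G₁)` is a finite (possibly
empty) sum of elements `I(H)` with `H` a weighted graph; in particular
`I(G₁) ≤ I(G₂)`. -/
theorem IG_le_of_Gamma_ge_and_Rsum_eq
    (n : ℕ) (hn : 1 ≤ n)
    (w₁ w₂ : ZMod (n + 3) → ZMod (n + 3) → ℤ)
    (h₁ : IsWG n w₁) (h₂ : IsWG n w₂)
    (hGamma : ∀ k l : ℕ, 1 ≤ k → k ≤ l → l ≤ n + 3 → Gamma n w₂ k l ≤ Gamma n w₁ k l)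
    (hR : ∀ p : ZMod (n + 3), Rsum n w₁ p = Rsum n w₂ p) :
    ∃ (r : ℕ) (H : Fin r → (ZMod (n + 3) → ZMod (n + 3) → ℤ)),
      (∀ i, IsWG n (H i)) ∧ IG n w₂ - IG n w₁ = ∑ i, IG n (H i) := by
  have hE := isExcess_of_Gamma n (fun x y => w₁ x y - w₂ x y)
    (fun x y => by rw [h₁.1, h₂.1]) (fun x => by rw [h₁.2.1, h₂.2.1, sub_self])
    (fun x => by
      have := hR x
      unfold Rsum at this
      rw [Finset.sum_sub_distrib, this, sub_self])
    (fun k l hk hkl hl => by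
      rw [Gamma_sub]
      exact sub_nonneg.mpr (hGamma k l hk hkl hl))
  exact IsExcess.exists_sum h₁ _ w₂ _ h₂ hE (Int.self_le_toNat _)
end

section
/- Let G_1 = (u_{ij}) and G_2 = (v_{ij}) be nontrivial weighted graphs such that Γ_{kl}(G_1) ≥ Γ_{kl}(G_2) for all 1 ≤ k ≤ l ≤ N, R_p(G_1) = R_p(G_2) for all vertices p, and min(u_{ij}, v_{ij}) = 0 for every segment {ij}. Then 1 ≤ dep(G_1) < dep(G_2) ≤ N/2. -/
/-!
The condition `min (u i j) (v i j) = 0` makes all weights nonnegative and the supports of `u` and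
`v` disjoint. For a set `A` of vertices let `S_w(A)` be the sum of `w` over `A × A`; if `A` is an
interval of labels this is `2 Γ(w)`. Since the vertex sums of `u` and `v` agree,
`S_u(A) - S_v(A)` is minus the sum of `u - v` over pairs in `A × Aᶜ`, so it does not change when
`A` is replaced by `Aᶜ`. A cyclic interval is an interval of labels or the complement of one,
hence `S_v(B) ≤ S_u(B)` for every proper cyclic interval `B`.

Suppose `dep v ≤ dep u`, and let `{i, j}` with `j = i + d`, `d = dep v`, carry a nonzero weight
of `v`. In the cyclic interval `B = {i, …, i + d}` all pairs other than `{i, j}` have length less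
than `d ≤ dep u`, so `u` vanishes on them; it vanishes on `{i, j}` by disjointness of supports.
Thus `S_u(B) = 0 < v i j ≤ S_v(B)`, a contradiction.
-/

open Finset

/-- The length `l({ij}) = min(|i−j|, N−|i−j|)` of a segment, computed cyclically. -/
def segLen (n : ℕ) (i j : ZMod (n + 3)) : ℕ := min (j - i).val (i - j).val

/-- `d` is the depth of the (nontrivial) weighted graph `w`: the minimum of the lengths
of segments of nonzero weight. -/
def IsDepth (n : ℕ) (w : ZMod (n + 3) → ZMod (n + 3) → ℤ) (d : ℕ) : Prop :=
  (∃ i j, w i j ≠ 0 ∧ segLen n i j = d) ∧ ∀ i j, w i j ≠ 0 → d ≤ segLen n i j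

/-- The label in `{1, …, n + 3}` of a vertex: the residue `0` carries the label `n + 3`. -/
def vertexLabel (n : ℕ) (x : ZMod (n + 3)) : ℕ := if x.val = 0 then n + 3 else x.val

lemma zmod_val_sub_cases (n : ℕ) (x y : ZMod (n + 3)) :
    (x - y).val = if y.val ≤ x.val then x.val - y.val else n + 3 + x.val - y.val := by
  have hx := ZMod.val_lt x
  have hy := ZMod.val_lt y
  split_ifs with h
  · exact ZMod.val_sub h
  · have e : (x - y).val = (n + 3 - y.val + x.val) % (n + 3) := Fin.val_sub x y
    rw [e, Nat.mod_eq_of_lt (by omega)]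
    omega

lemma sum_square_eq_two_mul (s : Finset ℕ) (f : ℕ → ℕ → ℤ) (hsymm : ∀ i j, f i j = f j i)
    (hdiag : ∀ i, f i i = 0) :
    ∑ i ∈ s, ∑ j ∈ s, f i j = 2 * ∑ i ∈ s, ∑ j ∈ s, if i < j then f i j else 0 := by
  have h : ∀ i j, f i j = (if i < j then f i j else 0) + (if j < i then f j i else 0) := by
    intro i j
    rcases lt_trichotomy i j with h | h | h
    · simp [h, h.not_gt]
    · subst h; simp [hdiag]
    · simp [h, h.not_gt, hsymm i j]
  rw [Finset.sum_congr rfl fun i _ => Finset.sum_congr rfl fun j _ => h i j]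
  simp only [Finset.sum_add_distrib]
  rw [Finset.sum_comm (f := fun i j => if j < i then f j i else 0)]
  ring

lemma sum_label_interval (n k l : ℕ) (hk : 1 ≤ k) (hl : l ≤ n + 3) (g : ZMod (n + 3) → ℤ) :
    ∑ x with k ≤ vertexLabel n x ∧ vertexLabel n x ≤ l, g x
      = ∑ i ∈ Finset.Icc k l, g (i : ZMod (n + 3)) := by
  have hlab : ∀ x, ((vertexLabel n x : ℕ) : ZMod (n + 3)) = x := by
    intro x
    unfold vertexLabel
    split_ifs with h
    · rw [ZMod.natCast_self, (ZMod.val_eq_zero x).1 h]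
    · exact ZMod.natCast_zmod_val x
  have hcast : ∀ a ∈ Finset.Icc k l, vertexLabel n (a : ZMod (n + 3)) = a := by
    intro a ha
    rw [Finset.mem_Icc] at ha
    unfold vertexLabel
    rw [ZMod.val_natCast]
    rcases eq_or_lt_of_le (ha.2.trans hl) with h | h
    · simp [h]
    · rw [Nat.mod_eq_of_lt h, if_neg (by omega)]
  refine Finset.sum_bij' (fun x _ => vertexLabel n x) (fun a _ => (a : ZMod (n + 3)))
    ?_ ?_ ?_ ?_ ?_
  · intro x hx; simpa using hx
  · intro a ha
    have := hcast a ha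
    simpa [this] using ha
  · intro x _; exact hlab x
  · intro a ha; exact hcast a ha
  · intro x _; rw [hlab]

lemma sum_square_label_interval (n k l : ℕ) (hk : 1 ≤ k) (hl : l ≤ n + 3)
    (w : ZMod (n + 3) → ZMod (n + 3) → ℤ) (hw : IsWG n w) :
    ∑ x with k ≤ vertexLabel n x ∧ vertexLabel n x ≤ l,
      ∑ y with k ≤ vertexLabel n y ∧ vertexLabel n y ≤ l, w x y = 2 * Gamma n w k l := by
  simp only [sum_label_interval n k l hk hl]
  exact sum_square_eq_two_mul _ (fun i j => w i j) (fun _ _ => hw.1 _ _) (fun _ => hw.2.1 _)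

/-- For a symmetric matrix with vanishing row sums, the sums over `A × A` and `Aᶜ × Aᶜ` agree:
both are minus the sum over `A × Aᶜ`. -/
lemma sum_square_compl {α : Type*} [Fintype α] [DecidableEq α] (A : Finset α) (D : α → α → ℤ)
    (hsymm : ∀ x y, D x y = D y x) (hrow : ∀ x, ∑ y, D x y = 0) :
    ∑ x ∈ Aᶜ, ∑ y ∈ Aᶜ, D x y = ∑ x ∈ A, ∑ y ∈ A, D x y := by
  have key : ∀ B : Finset α, ∑ x ∈ B, ∑ y ∈ A, D x y + ∑ x ∈ B, ∑ y ∈ Aᶜ, D x y = 0 := by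
    intro B
    rw [← Finset.sum_add_distrib]
    exact Finset.sum_eq_zero fun x _ => by rw [Finset.sum_add_sum_compl, hrow]
  have h1 := key A
  have h2 := key Aᶜ
  have h3 : ∑ x ∈ Aᶜ, ∑ y ∈ A, D x y = ∑ x ∈ A, ∑ y ∈ Aᶜ, D x y := by
    rw [Finset.sum_comm]
    simp only [hsymm]
  linarith

/-- The inequality between the `Γ_{kl}` extends to proper cyclic intervals `{i, …, i + d}`. -/
lemma sum_square_cyclic_le (n : ℕ) (u v : ZMod (n + 3) → ZMod (n + 3) → ℤ)
    (hu : IsWG n u) (hv : IsWG n v)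
    (hGamma : ∀ k l : ℕ, 1 ≤ k → k ≤ l → l ≤ n + 3 → Gamma n v k l ≤ Gamma n u k l)
    (hR : ∀ p : ZMod (n + 3), Rsum n u p = Rsum n v p)
    (i : ZMod (n + 3)) (d : ℕ) (hd : d + 1 < n + 3) :
    ∑ x with (x - i).val ≤ d, ∑ y with (y - i).val ≤ d, v x y
      ≤ ∑ x with (x - i).val ≤ d, ∑ y with (y - i).val ≤ d, u x y := by
  have hi := ZMod.val_lt i
  obtain ⟨a, ha⟩ : ∃ a, a = vertexLabel n i := ⟨_, rfl⟩
  unfold vertexLabel at ha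
  by_cases h : a + d ≤ n + 3
  · have hB : (Finset.univ.filter fun x : ZMod (n + 3) => (x - i).val ≤ d)
        = Finset.univ.filter fun x => a ≤ vertexLabel n x ∧ vertexLabel n x ≤ a + d := by
      ext x
      have hx := ZMod.val_lt x
      have hsub := zmod_val_sub_cases n x i
      have hlab : vertexLabel n x = if x.val = 0 then n + 3 else x.val := rfl
      simp only [Finset.mem_filter, Finset.mem_univ, true_and]
      split_ifs at ha hsub hlab <;> omega
    have ha1 : 1 ≤ a := by split_ifs at ha <;> omega
    rw [hB, sum_square_label_interval n _ _ ha1 h v hv, sum_square_label_interval n _ _ ha1 h u hu]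
    linarith [hGamma a (a + d) ha1 (by omega) h]
  · -- The interval wraps around past the label `n + 3`; its complement does not.
    have hB : (Finset.univ.filter fun x : ZMod (n + 3) => (x - i).val ≤ d)
        = (Finset.univ.filter fun x => a + d + 1 - (n + 3) ≤ vertexLabel n x ∧
            vertexLabel n x ≤ a - 1)ᶜ := by
      ext x
      have hx := ZMod.val_lt x
      have hsub := zmod_val_sub_cases n x i
      have hlab : vertexLabel n x = if x.val = 0 then n + 3 else x.val := rfl
      simp only [Finset.mem_filter, Finset.mem_univ, true_and, Finset.mem_compl]
      split_ifs at ha hsub hlab <;> omega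
    have haN : a ≤ n + 3 := by split_ifs at ha <;> omega
    have hc := sum_square_compl
      (Finset.univ.filter fun x => a + d + 1 - (n + 3) ≤ vertexLabel n x ∧
        vertexLabel n x ≤ a - 1) (fun x y => u x y - v x y)
      (fun x y => by rw [hu.1 x y, hv.1 x y])
      (fun x => by rw [Finset.sum_sub_distrib]; exact sub_eq_zero.2 (hR x))
    simp only [Finset.sum_sub_distrib] at hc
    rw [← hB, sum_square_label_interval n _ _ (by omega) (by omega) v hv,
      sum_square_label_interval n _ _ (by omega) (by omega) u hu] at hc
    linarith [hGamma (a + d + 1 - (n + 3)) (a - 1) (by omega) (by omega) (by omega)]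

lemma segLen_comm (n : ℕ) (i j : ZMod (n + 3)) : segLen n i j = segLen n j i := min_comm _ _

lemma two_mul_segLen_le (n : ℕ) (i j : ZMod (n + 3)) : 2 * segLen n i j ≤ n + 3 := by
  have h1 := zmod_val_sub_cases n i j
  have h2 := zmod_val_sub_cases n j i
  have hi := ZMod.val_lt i
  have hj := ZMod.val_lt j
  unfold segLen
  split_ifs at h1 h2 <;> omega

lemma segLen_pos (n : ℕ) (i j : ZMod (n + 3)) (h : i ≠ j) : 1 ≤ segLen n i j := by
  have h1 := zmod_val_sub_cases n i j
  have h2 := zmod_val_sub_cases n j i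
  have hi := ZMod.val_lt i
  have hj := ZMod.val_lt j
  have : i.val ≠ j.val := fun e => h (ZMod.val_injective _ e)
  unfold segLen
  split_ifs at h1 h2 <;> omega

/-- Two vertices of the cyclic interval `{i, …, i + d}` are at distance less than `d`, unless
they are its two ends. -/
lemma segLen_lt_or_ends (n : ℕ) (i x y : ZMod (n + 3)) (d : ℕ)
    (hx : (x - i).val ≤ d) (hy : (y - i).val ≤ d) :
    segLen n x y < d ∨ ((x - i).val = 0 ∧ (y - i).val = d) ∨
      ((x - i).val = d ∧ (y - i).val = 0) := by
  have h1 := zmod_val_sub_cases n (x - i) (y - i)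
  have h2 := zmod_val_sub_cases n (y - i) (x - i)
  rw [sub_sub_sub_cancel_right] at h1 h2
  unfold segLen
  split_ifs at h1 h2 <;> omega

lemma exists_isDepth (n : ℕ) (w : ZMod (n + 3) → ZMod (n + 3) → ℤ) (h : ∃ i j, w i j ≠ 0) :
    ∃ d, IsDepth n w d := by
  classical
  have hex : ∃ d, ∃ i j, w i j ≠ 0 ∧ segLen n i j = d := by
    obtain ⟨i, j, hij⟩ := h
    exact ⟨_, i, j, hij, rfl⟩
  exact ⟨Nat.find hex, Nat.find_spec hex, fun i j hij => Nat.find_min' hex ⟨i, j, hij, rfl⟩⟩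

/-- If `G₁, G₂` are nontrivial weighted graphs with `Γ_{kl}(G₁) ≥ Γ_{kl}(G₂)` for all
`1 ≤ k ≤ l ≤ N`, `R_p(G₁) = R_p(G₂)` for all `p`, and `min(u_{ij}, v_{ij}) = 0` for
every segment, then `1 ≤ dep(G₁) < dep(G₂) ≤ N/2`. -/
theorem depth_strict_mono
    (n : ℕ) (hn : 1 ≤ n)
    (u v : ZMod (n + 3) → ZMod (n + 3) → ℤ)
    (hu : IsWG n u) (hv : IsWG n v)
    (hu0 : ∃ i j, u i j ≠ 0) (hv0 : ∃ i j, v i j ≠ 0)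
    (hGamma : ∀ k l : ℕ, 1 ≤ k → k ≤ l → l ≤ n + 3 → Gamma n v k l ≤ Gamma n u k l)
    (hR : ∀ p : ZMod (n + 3), Rsum n u p = Rsum n v p)
    (hmin : ∀ i j, i ≠ j → min (u i j) (v i j) = 0) :
    ∃ d₁ d₂ : ℕ, IsDepth n u d₁ ∧ IsDepth n v d₂ ∧
      1 ≤ d₁ ∧ d₁ < d₂ ∧ 2 * d₂ ≤ n + 3 := by
  obtain ⟨d₁, h₁⟩ := exists_isDepth n u hu0
  obtain ⟨d₂, h₂⟩ := exists_isDepth n v hv0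
  refine ⟨d₁, d₂, h₁, h₂, ?_, ?_, ?_⟩
  · obtain ⟨⟨i, j, hij, rfl⟩, -⟩ := h₁
    exact segLen_pos n i j fun e => hij (by rw [e]; exact hu.2.1 j)
  · by_contra! hle
    have hvnn : ∀ x y, 0 ≤ v x y := by
      intro x y
      by_cases e : x = y
      · rw [e, hv.2.1]
      · exact (hmin x y e).symm.le.trans (min_le_right _ _)
    -- By symmetry of `v`, the short arc may be taken clockwise from `i` to `j`.
    obtain ⟨i, j, hij, hlen, hval⟩ :
        ∃ i j, v i j ≠ 0 ∧ segLen n i j = d₂ ∧ (j - i).val = d₂ := by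
      obtain ⟨⟨i, j, hij, hlen⟩, -⟩ := h₂
      rcases min_choice (j - i).val (i - j).val with h | h
      · exact ⟨i, j, hij, hlen, h.symm.trans hlen⟩
      · exact ⟨j, i, by rwa [hv.1], by rwa [segLen_comm], h.symm.trans hlen⟩
    have hne : i ≠ j := fun e => hij (by rw [e]; exact hv.2.1 j)
    have hd := two_mul_segLen_le n i j
    have hpos : 0 < v i j := lt_of_le_of_ne (hvnn i j) (Ne.symm hij)
    have huij : u i j = 0 := by
      have := hmin i j hne
      omega
    have hle' := sum_square_cyclic_le n u v hu hv hGamma hR i d₂ (by omega)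
    have hus : ∑ x with (x - i).val ≤ d₂, ∑ y with (y - i).val ≤ d₂, u x y = 0 := by
      refine Finset.sum_eq_zero fun x hx => Finset.sum_eq_zero fun y hy => ?_
      simp only [Finset.mem_filter, Finset.mem_univ, true_and] at hx hy
      have hi : ∀ z : ZMod (n + 3), (z - i).val = 0 → z = i := fun z hz =>
        sub_eq_zero.1 ((ZMod.val_eq_zero _).1 hz)
      have hj : ∀ z : ZMod (n + 3), (z - i).val = d₂ → z = j := fun z hz =>
        sub_left_injective (ZMod.val_injective _ (hz.trans hval.symm))
      rcases segLen_lt_or_ends n i x y d₂ hx hy with h | ⟨h, h'⟩ | ⟨h, h'⟩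
      · by_contra hne0
        have := h₁.2 x y hne0
        omega
      · rw [hi x h, hj y h', huij]
      · rw [hj x h, hi y h', hu.1, huij]
    have hvs : v i j ≤ ∑ x with (x - i).val ≤ d₂, ∑ y with (y - i).val ≤ d₂, v x y := by
      refine le_trans ?_ (Finset.single_le_sum
        (f := fun x => ∑ y with (y - i).val ≤ d₂, v x y)
        (fun x _ => Finset.sum_nonneg fun y _ => hvnn x y) (a := i) (by simp))
      exact Finset.single_le_sum (f := fun y => v i y) (fun y _ => hvnn i y) (a := j)
        (by simp [hval])
    linarith
  · obtain ⟨⟨i, j, -, rfl⟩, -⟩ := h₂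
    exact two_mul_segLen_le n i j
end

section
/- For every weighted graph G = (u_{ij}) and every segment {ij}, the weight can be recovered from the crossing sums: u_{ij} = (1/2)·( I_{ij}(G) + I_{i−1,j−1}(G) − I_{i,j−1}(G) − I_{i−1,j}(G) ), where all vertex labels are taken modulo N and I_{kl}(G) for any ordered pair of vertices k ≠ l is defined as Σ_{a∈I, b∉I} u_{ab} with I the cyclic interval {k+1, k+2, …, l}, and I_{kk}(G) = 0. -/
/-!
For a symmetric `u` with zero diagonal put `f S = Σ_{a ∈ S, b ∉ S} u a b`, so that
`Icyc n u k l = f (cycInt n k l)`. Adding a vertex `x ∉ S` changes `f` by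
`Σ_b u x b - 2 Σ_{b ∈ S} u x b` (`cutSum_insert`).

Let `A = {i+1, …, j-1}`. The intervals occurring in the formula are `A`, `A ∪ {j}`, `A ∪ {i}` and
`A ∪ {i, j}`; hence the alternating sum is the difference of the increments caused by adding `i`
to `A` and to `A ∪ {j}`, which is `2 u i j`. The one exception is `j = i - 1`: then `A ∪ {i, j}`
is the whole polygon while `cycInt n (i - 1) j` is empty, but `f` vanishes on both.
-/

open Finset

/-- The cyclic interval `{k+1, …, l}` of vertices (empty when `k = l`). -/
def cycInt (n : ℕ) (k l : ZMod (n + 3)) : Finset (ZMod (n + 3)) :=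
  Finset.univ.filter fun v => 1 ≤ (v - k).val ∧ (v - k).val ≤ (l - k).val

/-- `I_{kl}(w) = Σ_{a∈I, b∉I} w_{ab}` where `I = {k+1,…,l}` is the cyclic interval of
vertex labels modulo `N`; in particular `I_{kk}(w) = 0`. -/
def Icyc (n : ℕ) {M : Type*} [AddCommMonoid M]
    (w : ZMod (n + 3) → ZMod (n + 3) → M) (k l : ZMod (n + 3)) : M :=
  ∑ a ∈ cycInt n k l, ∑ b ∈ (cycInt n k l)ᶜ, w a b

/-- The total weight of the segments leaving the vertex set `S`. -/
def cutSum (n : ℕ) (u : ZMod (n + 3) → ZMod (n + 3) → ℤ) (S : Finset (ZMod (n + 3))) : ℤ :=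
  ∑ a ∈ S, ∑ b ∈ Sᶜ, u a b

theorem cutSum_eq (n : ℕ) (u : ZMod (n + 3) → ZMod (n + 3) → ℤ) (S : Finset (ZMod (n + 3))) :
    cutSum n u S = ∑ a ∈ S, ∑ b, u a b - ∑ a ∈ S, ∑ b ∈ S, u a b := by
  rw [cutSum, ← Finset.sum_sub_distrib]
  refine Finset.sum_congr rfl fun a _ => ?_
  rw [← Finset.sum_add_sum_compl S (u a)]
  ring

theorem cutSum_insert {n : ℕ} {u : ZMod (n + 3) → ZMod (n + 3) → ℤ}
    (hs : ∀ i j, u i j = u j i) (h0 : ∀ i, u i i = 0)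
    {S : Finset (ZMod (n + 3))} {x : ZMod (n + 3)} (hx : x ∉ S) :
    cutSum n u (insert x S) = cutSum n u S + ∑ b, u x b - 2 * ∑ b ∈ S, u x b := by
  have h1 : ∑ a ∈ S, u a x = ∑ a ∈ S, u x a := Finset.sum_congr rfl fun a _ => hs a x
  simp only [cutSum_eq, Finset.sum_insert hx, Finset.sum_add_distrib, h0, h1]
  ring

theorem val_add_one_cyc {n : ℕ} (x : ZMod (n + 3)) :
    (x + 1).val = if x.val + 1 = n + 3 then 0 else x.val + 1 := by
  have hx := ZMod.val_lt x
  have h1 : (1 : ZMod (n + 3)).val = 1 := ZMod.val_one'' (by omega)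
  rw [ZMod.val_add, h1]
  split_ifs with h
  · rw [h, Nat.mod_self]
  · exact Nat.mod_eq_of_lt (by omega)

theorem val_sub_one_cyc {n : ℕ} {c : ZMod (n + 3)} (hc : c ≠ 0) :
    (c - 1).val = c.val - 1 := by
  have h := val_add_one_cyc (c - 1)
  have h2 : c.val ≠ 0 := (ZMod.val_ne_zero c).2 hc
  rw [sub_add_cancel] at h
  split_ifs at h <;> omega

theorem eq_left_iff_val {n : ℕ} (i v : ZMod (n + 3)) : v = i ↔ (v - i).val = 0 := by
  rw [ZMod.val_eq_zero, sub_eq_zero]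

theorem eq_right_iff_val {n : ℕ} (i j v : ZMod (n + 3)) :
    v = j ↔ (v - i).val = (j - i).val := by
  rw [(ZMod.val_injective (n + 3)).eq_iff, sub_left_inj]

theorem mem_cycInt_sub_one_right {n : ℕ} {i j : ZMod (n + 3)} (hij : i ≠ j)
    (v : ZMod (n + 3)) :
    v ∈ cycInt n i (j - 1) ↔ 1 ≤ (v - i).val ∧ (v - i).val ≤ (j - i).val - 1 := by
  rw [← val_sub_one_cyc (sub_ne_zero.2 hij.symm), sub_right_comm j i 1]
  simp [cycInt]

theorem cycInt_eq_insert_right {n : ℕ} {i j : ZMod (n + 3)} (hij : i ≠ j) :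
    cycInt n i j = insert j (cycInt n i (j - 1)) := by
  ext v
  have hc : (j - i).val ≠ 0 := (ZMod.val_ne_zero _).2 (sub_ne_zero.2 hij.symm)
  rw [Finset.mem_insert, mem_cycInt_sub_one_right hij, eq_right_iff_val i j v]
  simp only [cycInt, Finset.mem_filter, Finset.mem_univ, true_and]
  omega

theorem cycInt_sub_one_sub_one {n : ℕ} {i j : ZMod (n + 3)} (hij : i ≠ j) :
    cycInt n (i - 1) (j - 1) = insert i (cycInt n i (j - 1)) := by
  ext v
  have hc : (j - i).val ≠ 0 := (ZMod.val_ne_zero _).2 (sub_ne_zero.2 hij.symm)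
  have hlt := ZMod.val_lt (j - i)
  have hv := val_add_one_cyc (v - i)
  rw [Finset.mem_insert, mem_cycInt_sub_one_right hij, eq_left_iff_val i v]
  simp only [cycInt, Finset.mem_filter, Finset.mem_univ, true_and]
  rw [show v - (i - 1) = v - i + 1 by ring, show j - 1 - (i - 1) = j - i by ring]
  split_ifs at hv <;> omega

/-- When `j = i - 1` the two vertex sets are complementary (empty and full), so only their cut
sums agree. -/
theorem cutSum_cycInt_sub_one_left {n : ℕ} (u : ZMod (n + 3) → ZMod (n + 3) → ℤ)
    {i j : ZMod (n + 3)} (hij : i ≠ j) :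
    cutSum n u (cycInt n (i - 1) j) =
      cutSum n u (insert i (insert j (cycInt n i (j - 1)))) := by
  have hc : (j - i).val ≠ 0 := (ZMod.val_ne_zero _).2 (sub_ne_zero.2 hij.symm)
  have hj := val_add_one_cyc (j - i)
  have key : ∀ v, v ∈ insert i (insert j (cycInt n i (j - 1))) ↔ (v - i).val ≤ (j - i).val := by
    intro v
    rw [Finset.mem_insert, Finset.mem_insert, mem_cycInt_sub_one_right hij,
      eq_left_iff_val i v, eq_right_iff_val i j v]
    omega
  have key' : ∀ v, v ∈ cycInt n (i - 1) j ↔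
      1 ≤ (v - i + 1).val ∧ (v - i + 1).val ≤ (j - i + 1).val := by
    intro v
    rw [show v - i + 1 = v - (i - 1) by ring, show j - i + 1 = j - (i - 1) by ring]
    simp [cycInt]
  by_cases h : (j - i).val + 1 = n + 3
  · have e1 : cycInt n (i - 1) j = ∅ := by
      ext v
      rw [key', hj, if_pos h]
      simp only [Finset.notMem_empty, iff_false]
      omega
    have e2 : insert i (insert j (cycInt n i (j - 1))) = Finset.univ := by
      ext v
      have hv := ZMod.val_lt (v - i)
      rw [key]
      simp only [Finset.mem_univ, iff_true]
      omega
    rw [e1, e2]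
    simp [cutSum]
  · congr 1
    ext v
    have hlt := ZMod.val_lt (j - i)
    have hv := val_add_one_cyc (v - i)
    rw [if_neg h] at hj
    rw [key, key', hj]
    split_ifs at hv <;> omega

/-- The weight of a weighted graph is recovered from the crossing sums:
`u_{ij} = (1/2)·(I_{ij} + I_{i−1,j−1} − I_{i,j−1} − I_{i−1,j})`, labels modulo `N`. -/
theorem weight_eq_half_alternating_Icyc
    (n : ℕ) (hn : 1 ≤ n)
    (u : ZMod (n + 3) → ZMod (n + 3) → ℤ) (hu : IsWG n u)
    (i j : ZMod (n + 3)) (hij : i ≠ j) :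
    (u i j : ℚ) = (1 / 2) *
      ((Icyc n u i j + Icyc n u (i - 1) (j - 1)
        - Icyc n u i (j - 1) - Icyc n u (i - 1) j : ℤ) : ℚ) := by
  obtain ⟨hs, h0, -⟩ := hu
  have hi : i ∉ cycInt n i (j - 1) := by simp [cycInt]
  have hj : j ∉ cycInt n i (j - 1) := by
    have hc : (j - i).val ≠ 0 := (ZMod.val_ne_zero _).2 (sub_ne_zero.2 hij.symm)
    rw [mem_cycInt_sub_one_right hij]
    omega
  have hi' : i ∉ insert j (cycInt n i (j - 1)) := by simp [hij, hi]
  have hI : ∀ k l, Icyc n u k l = cutSum n u (cycInt n k l) := fun _ _ => rfl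
  have key : Icyc n u i j + Icyc n u (i - 1) (j - 1)
      - Icyc n u i (j - 1) - Icyc n u (i - 1) j = 2 * u i j := by
    rw [hI, hI, hI, hI, cutSum_cycInt_sub_one_left u hij, cycInt_sub_one_sub_one hij,
      cycInt_eq_insert_right hij, cutSum_insert hs h0 hi', cutSum_insert hs h0 hi,
      Finset.sum_insert hj]
    ring
  rw [key]
  push_cast
  ring
end

section
/- The map G ↦ I(G) from weighted graphs to the ring P_n is injective: if G_1 and G_2 are weighted graphs with I(G_1) = I(G_2) in P_n, then G_1 = G_2. (Injectivity part of the paper's theorem that weighted graphs biject with products of elements of the canonical basis of Ã_{A_n}.) -/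
/-!
Any family of integers `x_i` gives a point of the Plücker ring: for `i < j` (as labels
`0, …, N - 1`) send both `A_{ij}` and `A_{ji}` to `x_j - x_i`. The Plücker relation is then the
Ptolemy identity `(x_k - x_i)(x_l - x_j) = (x_j - x_i)(x_l - x_k) + (x_l - x_i)(x_k - x_j)`, which
is invariant under cyclic rotation of `i, j, k, l`, so only the cyclic order matters
(`ptolemy`, `evalHom`).

To read off the weight of a single segment `{a b}` with `a < b`, take a prime `P > N` and put
`x_i = i` for `i ≠ b` and `x_b = a + P`. Then `A_{ab} ↦ P`, while every other segment goes to an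
integer prime to `P`, hence nonzero (`chord_ne_zero`, `not_dvd_chord`). The `P`-adic
valuation of the image of `I(G)` is therefore `w_{ab}`; it is computed for the numerator and the
denominator separately in `val_numer` and `val_denom`.
-/

open Finset

/-! ### Integer points of the Plücker ring -/

/-- The value at `A_{ij}` of the integer point with parameters `x`: the difference of `x i` and
`x j`, with the sign that makes it symmetric in `i, j` and equal to `x j - x i` when `i`
precedes `j`. -/
def chord (n : ℕ) (x : ZMod (n + 3) → ℤ) (i j : ZMod (n + 3)) : ℤ :=
  if i.val < j.val then x j - x i else x i - x j

theorem val_sub_cases (n : ℕ) (i j : ZMod (n + 3)) :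
    (i.val ≤ j.val ∧ (j - i).val = j.val - i.val) ∨
      (j.val < i.val ∧ (j - i).val = n + 3 + j.val - i.val) := by
  rcases le_or_gt i.val j.val with h | h
  · exact Or.inl ⟨h, ZMod.val_sub h⟩
  · refine Or.inr ⟨h, ?_⟩
    have hne : i - j ≠ 0 := by
      intro h0
      rw [sub_eq_zero.mp h0] at h
      exact lt_irrefl _ h
    have : NeZero (i - j) := ⟨hne⟩
    have h1 := ZMod.val_neg_of_ne_zero (i - j)
    rw [neg_sub, ZMod.val_sub h.le] at h1
    omega

theorem chord_symm (n : ℕ) (x : ZMod (n + 3) → ℤ) {i j : ZMod (n + 3)} (h : i ≠ j) :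
    chord n x i j = chord n x j i := by
  have : i.val ≠ j.val := fun e => h (ZMod.val_injective _ e)
  unfold chord
  split_ifs <;> first | rfl | omega

theorem ptolemy (n : ℕ) (x : ZMod (n + 3) → ℤ) {i j k l : ZMod (n + 3)}
    (h : Clockwise n i j k l) :
    chord n x i k * chord n x j l
      = chord n x i j * chord n x k l + chord n x i l * chord n x j k := by
  obtain ⟨h1, h2, h3⟩ := h
  have hi := ZMod.val_lt i
  have hj := ZMod.val_lt j
  have hk := ZMod.val_lt k
  have hl := ZMod.val_lt l
  -- A clockwise quadruple is a rotation of one whose labels increase.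
  have key : (i.val < j.val ∧ j.val < k.val ∧ k.val < l.val) ∨
      (j.val < k.val ∧ k.val < l.val ∧ l.val < i.val) ∨
      (k.val < l.val ∧ l.val < i.val ∧ i.val < j.val) ∨
      (l.val < i.val ∧ i.val < j.val ∧ j.val < k.val) := by
    rcases val_sub_cases n i j with a | a <;> rcases val_sub_cases n i k with b | b <;>
      rcases val_sub_cases n i l with c | c <;> omega
  unfold chord
  rcases key with h | h | h | h <;> split_ifs <;> first | omega | ring

/-- The ring homomorphism `A_{ij} ↦ chord n x i j` out of the Plücker ring. -/
noncomputable def evalHom (n : ℕ) (x : ZMod (n + 3) → ℤ) : PlueckerRing n →+* ℤ :=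
  Ideal.Quotient.lift (pluIdeal n)
    (MvPolynomial.eval₂Hom (RingHom.id ℤ) fun p : Seg n => chord n x p.1.1 p.1.2) <| by
      intro a ha
      rw [← RingHom.mem_ker]
      refine (Ideal.span_le.mpr ?_ : pluIdeal n ≤ _) ha
      rintro p (⟨i, j, h, rfl⟩ | ⟨i, j, k, l, hik, hjl, hij, hkl, hil, hjk, hc, rfl⟩)
      · simp [RingHom.mem_ker, chord_symm n x h]
      · simp [RingHom.mem_ker, ptolemy n x hc]

theorem evalHom_Avar (n : ℕ) (x : ZMod (n + 3) → ℤ) (p : Seg n) :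
    evalHom n x (Avar n p) = chord n x p.1.1 p.1.2 := by
  simp [evalHom, Avar]

/-! ### Isolating one segment by a prime -/

/-- The parameters isolating the segment `{a b}`: the labels themselves, except that `b` is moved
to the point congruent to `a` modulo `P`. -/
def param (n P : ℕ) (a b : ZMod (n + 3)) (i : ZMod (n + 3)) : ℤ :=
  if i = b then a.val + P else i.val

theorem chord_param_self {n P : ℕ} {a b : ZMod (n + 3)} (hab : a.val < b.val) :
    chord n (param n P a b) a b = P := by
  have : a ≠ b := by rintro rfl; exact lt_irrefl _ hab
  simp [chord, param, hab, this]

theorem not_dvd_chord {n P : ℕ} (hP : n + 3 < P) {a b i j : ZMod (n + 3)}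
    (hab : a.val < b.val) (hij : i.val < j.val) (h : ¬ (i = a ∧ j = b)) :
    ¬ (P : ℤ) ∣ chord n (param n P a b) i j := by
  have hi := ZMod.val_lt i
  have hj := ZMod.val_lt j
  have ha := ZMod.val_lt a
  have small : ∀ d : ℤ, d ≠ 0 → |d| < P → ¬ (P : ℤ) ∣ d := fun d h0 hd hdvd =>
    h0 (Int.eq_zero_of_abs_lt_dvd hdvd hd)
  have hinj : ∀ u v : ZMod (n + 3), u.val = v.val → u = v := fun u v e =>
    ZMod.val_injective _ e
  rw [chord, if_pos hij]
  unfold param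
  by_cases hjb : j = b
  · have hib : i ≠ b := by rintro rfl; rw [hjb] at hij; exact lt_irrefl _ hij
    have hia : i.val ≠ a.val := fun e => h ⟨hinj _ _ e, hjb⟩
    rw [if_pos hjb, if_neg hib]
    intro hd
    refine small ((a.val : ℤ) - i.val) (by omega) (by rw [abs_lt]; omega) ?_
    obtain ⟨c, hc⟩ := hd
    exact ⟨c - 1, by linarith⟩
  · by_cases hib : i = b
    · have hja : j.val ≠ a.val := by rw [hib] at hij; omega
      rw [if_neg hjb, if_pos hib]
      intro hd
      refine small ((j.val : ℤ) - a.val) (by omega) (by rw [abs_lt]; omega) ?_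
      obtain ⟨c, hc⟩ := hd
      exact ⟨c + 1, by linarith⟩
    · rw [if_neg hjb, if_neg hib]
      exact small _ (by omega) (by rw [abs_lt]; omega)

theorem chord_ne_zero {n P : ℕ} (hP : n + 3 < P) {a b i j : ZMod (n + 3)}
    (hab : a.val < b.val) (hij : i.val < j.val) :
    chord n (param n P a b) i j ≠ 0 := by
  by_cases h : i = a ∧ j = b
  · rw [h.1, h.2, chord_param_self hab]
    omega
  · intro h0
    exact not_dvd_chord hP hab hij h (h0 ▸ dvd_zero _)

/-! ### Valuations of numerator and denominator -/

theorem padicValInt_prod {ι : Type*} {P : ℕ} [Fact P.Prime] (s : Finset ι) (f : ι → ℤ)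
    (hf : ∀ i ∈ s, f i ≠ 0) :
    padicValInt P (∏ i ∈ s, f i) = ∑ i ∈ s, padicValInt P (f i) := by
  classical
  induction s using Finset.induction_on with
  | empty => simp
  | insert i s hi ih =>
    rw [Finset.prod_insert hi, Finset.sum_insert hi,
      padicValInt.mul (hf i (Finset.mem_insert_self i s))
        (Finset.prod_ne_zero_iff.mpr fun j hj => hf j (Finset.mem_insert_of_mem hj)),
      ih fun j hj => hf j (Finset.mem_insert_of_mem hj)]

theorem padicValInt_pow' {P : ℕ} [Fact P.Prime] (d : ℤ) (hd : d ≠ 0) (m : ℕ) :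
    padicValInt P (d ^ m) = m * padicValInt P d := by
  have := padicValInt_prod (P := P) (Finset.range m) (fun _ => d) (fun _ _ => hd)
  simpa using this

/-- A product of chords over segments `{i j}`, `i < j`, is nonzero, and its `P`-adic valuation is
the exponent at the isolated segment. -/
theorem val_prod {n P : ℕ} [Fact P.Prime] (hP : n + 3 < P) {a b : ZMod (n + 3)}
    (hab : a.val < b.val) (hne : a ≠ b) (e : Seg n → ℕ) :
    (∏ p : Seg n, if p.1.1.val < p.1.2.val
        then chord n (param n P a b) p.1.1 p.1.2 ^ e p else 1) ≠ 0 ∧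
    padicValInt P (∏ p : Seg n, if p.1.1.val < p.1.2.val
        then chord n (param n P a b) p.1.1 p.1.2 ^ e p else 1) = e ⟨(a, b), hne⟩ := by
  have hnz : ∀ p ∈ (Finset.univ : Finset (Seg n)), (if p.1.1.val < p.1.2.val
        then chord n (param n P a b) p.1.1 p.1.2 ^ e p else 1) ≠ 0 := by
    intro p _
    split_ifs with h
    · exact pow_ne_zero _ (chord_ne_zero hP hab h)
    · exact one_ne_zero
  refine ⟨Finset.prod_ne_zero_iff.mpr hnz, ?_⟩
  rw [padicValInt_prod _ _ hnz, Finset.sum_eq_single ⟨(a, b), hne⟩]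
  · simp only [hab, if_true]
    rw [padicValInt_pow' _ (chord_ne_zero hP hab hab), chord_param_self hab,
      padicValInt.self (Fact.out : P.Prime).one_lt, mul_one]
  · rintro ⟨⟨i, j⟩, hp⟩ _ hpq
    dsimp only
    split_ifs with h
    · rw [padicValInt_pow' _ (chord_ne_zero hP hab h),
        padicValInt.eq_zero_of_not_dvd (not_dvd_chord hP hab h ?_), mul_zero]
      rintro ⟨rfl, rfl⟩
      exact hpq rfl
    · simp
  · intro h
    exact absurd (Finset.mem_univ _) h

theorem val_numer {n P : ℕ} [Fact P.Prime] (hP : n + 3 < P) {a b : ZMod (n + 3)}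
    (hab : a.val < b.val) (w : ZMod (n + 3) → ZMod (n + 3) → ℤ) :
    evalHom n (param n P a b) (numerIG n w) ≠ 0 ∧
    padicValInt P (evalHom n (param n P a b) (numerIG n w)) = (w a b).toNat := by
  have hne : a ≠ b := by rintro rfl; exact lt_irrefl _ hab
  have := val_prod hP hab hne fun p => (w p.1.1 p.1.2).toNat
  simpa only [numerIG, map_prod, apply_ite (evalHom n (param n P a b)), map_pow, map_one,
    evalHom_Avar] using this

theorem val_denom {n P : ℕ} [Fact P.Prime] (hP : n + 3 < P) {a b : ZMod (n + 3)}
    (hab : a.val < b.val) (w : ZMod (n + 3) → ZMod (n + 3) → ℤ) :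
    evalHom n (param n P a b) (denomIG n w) ≠ 0 ∧
    padicValInt P (evalHom n (param n P a b) (denomIG n w))
      = if IsEdge n a b then (-(w a b)).toNat else 0 := by
  have hne : a ≠ b := by rintro rfl; exact lt_irrefl _ hab
  have := val_prod hP hab hne fun p =>
    if IsEdge n p.1.1 p.1.2 then (-(w p.1.1 p.1.2)).toNat else 0
  have hE : evalHom n (param n P a b) (denomIG n w) =
      ∏ p : Seg n, if p.1.1.val < p.1.2.val then chord n (param n P a b) p.1.1 p.1.2 ^
        (if IsEdge n p.1.1 p.1.2 then (-(w p.1.1 p.1.2)).toNat else 0) else 1 := by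
    rw [denomIG, Submonoid.coe_finsetProd, map_prod]
    refine Finset.prod_congr rfl fun p _ => ?_
    by_cases h1 : IsEdge n p.1.1 p.1.2 <;> by_cases h2 : p.1.1.val < p.1.2.val <;>
      simp [h1, h2, evalHom_Avar]
  rw [hE]
  exact this

theorem evalHom_edgeMonoid_ne_zero {n P : ℕ} (hP : n + 3 < P) {a b : ZMod (n + 3)}
    (hab : a.val < b.val) {c : PlueckerRing n} (hc : c ∈ edgeMonoid n) :
    evalHom n (param n P a b) c ≠ 0 := by
  suffices h : edgeMonoid n ≤ (nonZeroDivisors ℤ).comap (evalHom n (param n P a b)) from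
    nonZeroDivisors.ne_zero (h hc)
  refine Submonoid.closure_le.mpr ?_
  rintro _ ⟨⟨⟨i, j⟩, hij⟩, -, rfl⟩
  refine mem_nonZeroDivisors_of_ne_zero ?_
  rw [evalHom_Avar]
  have hv : i.val ≠ j.val := fun e => hij (ZMod.val_injective _ e)
  rcases lt_or_gt_of_ne hv with h | h
  · exact chord_ne_zero hP hab h
  · rw [chord_symm n _ hij]
    exact chord_ne_zero hP hab h

/-! ### Injectivity -/

theorem weight_eq (n : ℕ) (w₁ w₂ : ZMod (n + 3) → ZMod (n + 3) → ℤ)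
    (h₁ : IsWG n w₁) (h₂ : IsWG n w₂) (h : IG n w₁ = IG n w₂) {a b : ZMod (n + 3)}
    (hab : a.val < b.val) : w₁ a b = w₂ a b := by
  obtain ⟨P, hP, hprime⟩ := Nat.exists_infinite_primes (n + 4)
  have : Fact P.Prime := ⟨hprime⟩
  have hP' : n + 3 < P := hP
  have hne : a ≠ b := by rintro rfl; exact lt_irrefl _ hab
  obtain ⟨c, hc⟩ := Localization.r_iff_exists.mp (Localization.mk_eq_mk_iff.mp h)
  have hc' := congrArg (evalHom n (param n P a b)) hc
  simp only [map_mul] at hc'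
  have hmul := mul_left_cancel₀ (evalHom_edgeMonoid_ne_zero hP' hab c.2) hc'
  obtain ⟨n1, v1⟩ := val_numer hP' hab w₁
  obtain ⟨n2, v2⟩ := val_numer hP' hab w₂
  obtain ⟨d1, u1⟩ := val_denom hP' hab w₁
  obtain ⟨d2, u2⟩ := val_denom hP' hab w₂
  have hv := congrArg (padicValInt P) hmul
  rw [padicValInt.mul d2 n1, padicValInt.mul d1 n2, v1, v2, u1, u2] at hv
  by_cases he : IsEdge n a b
  · simp only [if_pos he] at hv
    omega
  · simp only [if_neg he] at hv
    have p1 := h₁.2.2 a b ⟨hne, he⟩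
    have p2 := h₂.2.2 a b ⟨hne, he⟩
    omega

/-- The map `G ↦ I(G)` from weighted graphs to `P_n` is injective. -/
theorem IG_injective
    (n : ℕ) (hn : 1 ≤ n)
    (w₁ w₂ : ZMod (n + 3) → ZMod (n + 3) → ℤ)
    (h₁ : IsWG n w₁) (h₂ : IsWG n w₂)
    (h : IG n w₁ = IG n w₂) :
    w₁ = w₂ := by
  funext i j
  rcases lt_trichotomy i.val j.val with hij | hij | hij
  · exact weight_eq n w₁ w₂ h₁ h₂ h hij
  · rw [ZMod.val_injective _ hij, h₁.2.1, h₂.2.1]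
  · rw [h₁.1 i j, h₂.1 i j]
    exact weight_eq n w₁ w₂ h₁ h₂ h hij
end
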